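/- arXiv:1404.1690 — 3 statements merged into one kernel-verified Lean document; each statement's English description precedes it below -/
import Mathlib

section
/- Assume the admissibility hypotheses on φ¹, ψ¹, c₁, c₂. Then the full cone-adapted shearlet system SH(φ, ψ, ψ̃, c) — consisting of the functions (x₁, x₂) ↦ φ¹(x₁ − c₁ m₁) φ¹(x₂ − c₁ m₂) for m ∈ ℤ², the functions ψ_{j,k,m}(x₁, x₂) = 2^{3j/4} ψ¹(2^j x₁ + 2^{⌊j/2⌋} k x₂ − c₁ m₁) φ¹(2^{⌊j/2⌋} x₂ − c₂ m₂) for j ∈ ℕ, k ∈ ℤ with |k| ≤ 2^{⌊j/2⌋}, m ∈ ℤ², and the functions ψ̃_{j,k,m}(x₁, x₂) = 2^{3j/4} φ¹(2^{⌊j/2⌋} x₁ − c₂ m₁) ψ¹(2^j x₂ + 2^{⌊j/2⌋} k x₁ − c₁ m₂) for j ∈ ℕ, k ∈ ℤ with |k| ≤ 2^{⌊j/2⌋} − 1, m ∈ ℤ² — is linearly independent as a family in L²(ℝ²) indexed by these parameters. -/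
open MeasureTheory

/-!
On the Fourier side a shearlet becomes, up to a constant, `u(ξ) v(η - s ξ)` where `s` is its slope,
`u` a dilated and modulated copy of `q = 𝓕 ψ` and `v` one of `p = 𝓕 φ`. Compact support and
orthogonality turn `ψ ∈ V₁ ∩ V₂` into relations `q(2ξ) = A(ξ) p(ξ)` and `q(4ξ) = E(ξ) p(ξ)` with
trigonometric polynomials `A` and `E`. Hence all dilates of `p` and `q` are rational in
exponentials over `p`, and clearing denominators makes the first factors periodic.

Consider a finite linear relation. Along a ray of slope `s ≠ 0` every `v(η - t ξ)` with `t ≠ s`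
tends to zero. As the slopes `t` of the second cone satisfy `s t ≠ 1`, only the part of slope `s`
survives, and periodicity and analyticity upgrade its vanishing in the limit to its vanishing. So
every coefficient with nonzero shear is zero. Among the remaining terms take the finest scale `2^J`.
For fixed `η`, the wavelets of that scale add up to `P(ξ/2^J) q(ξ/2^J)`, all the rest is of the form
`Q(ξ/2^J) p(ξ/2^J)` after clearing denominators, and `P` and `Q` have a common odd period `b`.
Shifting `ξ/2^{J+1}` by `b/2` produces a second equation, whose determinant with the first one is
`A(w) E(w + 1/2) - A(w + 1/2) E(w)`; if it vanished identically, `ψ` would fail to be orthogonal to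
its dilates. So `P = 0`, and the scales are removed one by one.
-/

namespace Shearlet

open Filter Topology
open scoped FourierTransform

/-! ### The Fourier kernel -/

/-- The Fourier kernel `x ↦ e^{-2πix}` as a complex-valued function: `𝓕 f ξ` is the integral of
`fourierKernel (x * ξ) * f x`. -/
noncomputable def fourierKernel (x : ℝ) : ℂ := (𝐞 (-x) : ℂ)

lemma fourierKernel_eq_cexp (x : ℝ) :
    fourierKernel x = Complex.exp ((-2 * Real.pi * x : ℝ) * Complex.I) := by
  rw [fourierKernel, Real.fourierChar_apply]
  congr 3
  ring

lemma fourierKernel_add (x y : ℝ) :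
    fourierKernel (x + y) = fourierKernel x * fourierKernel y := by
  rw [fourierKernel, neg_add, AddChar.map_add_eq_mul, Circle.coe_mul]
  rfl

@[simp]
lemma fourierKernel_zero : fourierKernel 0 = 1 := by
  simp [fourierKernel]

@[simp]
lemma fourierKernel_intCast (n : ℤ) : fourierKernel n = 1 := by
  rw [fourierKernel_eq_cexp, Complex.exp_eq_one_iff]
  exact ⟨-n, by push_cast; ring⟩

lemma fourierKernel_half : fourierKernel (1 / 2) = -1 := by
  rw [fourierKernel_eq_cexp, ← Complex.exp_neg_pi_mul_I]
  congr 1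
  push_cast
  ring

lemma norm_fourierKernel (x : ℝ) : ‖fourierKernel x‖ = 1 := Circle.norm_coe _

lemma fourierKernel_ne_zero (x : ℝ) : fourierKernel x ≠ 0 := Circle.coe_ne_zero _

@[fun_prop]
lemma continuous_fourierKernel : Continuous fourierKernel := by
  unfold fourierKernel
  fun_prop

lemma analyticOnNhd_fourierKernel_mul (c : ℝ) :
    AnalyticOnNhd ℝ (fun x ↦ fourierKernel (c * x)) Set.univ := by
  intro x _
  simp only [fourierKernel_eq_cexp]
  have hexponent : AnalyticAt ℝ (fun x : ℝ ↦ (-2 * Real.pi * (c * x) : ℝ) * Complex.I) x :=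
    ((Complex.ofRealCLM.analyticAt _).comp
      (show AnalyticAt ℝ (fun x : ℝ ↦ -2 * Real.pi * (c * x)) x by fun_prop)).mul analyticAt_const
  exact (analyticAt_cexp.restrictScalars (𝕜 := ℝ)).comp_of_eq hexponent rfl

/-! ### Real-analytic functions on the line -/

section Analytic

variable {f g : ℝ → ℂ}

lemma continuous_of_analyticOnNhd (hf : AnalyticOnNhd ℝ f Set.univ) : Continuous f :=
  continuousOn_univ.mp hf.continuousOn

lemma analyticOnNhd_comp_affine (hf : AnalyticOnNhd ℝ f Set.univ) (a b : ℝ) :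
    AnalyticOnNhd ℝ (fun x ↦ f (a * x + b)) Set.univ := fun x _ ↦
  (hf _ (Set.mem_univ _)).comp (show AnalyticAt ℝ (fun x : ℝ ↦ a * x + b) x by fun_prop)

lemma analyticOnNhd_comp_mul_left (hf : AnalyticOnNhd ℝ f Set.univ) (a : ℝ) :
    AnalyticOnNhd ℝ (fun x ↦ f (a * x)) Set.univ := by
  simpa using analyticOnNhd_comp_affine hf a 0

lemma comp_affine_ne_zero (hf : f ≠ 0) {a : ℝ} (ha : a ≠ 0) (b : ℝ) :
    (fun x ↦ f (a * x + b)) ≠ 0 := by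
  obtain ⟨x, hx⟩ := Function.ne_iff.mp hf
  refine Function.ne_iff.mpr ⟨(x - b) / a, ?_⟩
  rwa [mul_div_cancel₀ _ ha, sub_add_cancel]

lemma comp_mul_left_ne_zero (hf : f ≠ 0) {a : ℝ} (ha : a ≠ 0) : (fun x ↦ f (a * x)) ≠ 0 := by
  simpa using comp_affine_ne_zero hf ha 0

lemma eq_zero_of_analytic_mul_eq_zero (hf : AnalyticOnNhd ℝ f Set.univ) (hf0 : f ≠ 0)
    (hg : Continuous g) (h : ∀ x, f x * g x = 0) : g = 0 := by
  by_contra hg0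
  obtain ⟨x, hx⟩ := Function.ne_iff.mp hg0
  have hf_near : f =ᶠ[𝓝 x] 0 := by
    filter_upwards [hg.continuousAt.eventually_ne hx] with y hy
    exact (mul_eq_zero.mp (h y)).resolve_right hy
  exact hf0 (hf.eq_of_eventuallyEq analyticOnNhd_const hf_near)

lemma analytic_mul_ne_zero (hf : AnalyticOnNhd ℝ f Set.univ) (hf0 : f ≠ 0)
    (hg : Continuous g) (hg0 : g ≠ 0) : f * g ≠ 0 := fun h ↦
  hg0 (eq_zero_of_analytic_mul_eq_zero hf hf0 hg (congrFun h))

end Analytic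

/-! ### Periodic analytic functions and trigonometric polynomials -/

/-- The algebra of real-analytic `T`-periodic functions on the line. -/
def periodicAnalytic (T : ℝ) : Subalgebra ℂ (ℝ → ℂ) where
  carrier := {f | AnalyticOnNhd ℝ f Set.univ ∧ Function.Periodic f T}
  mul_mem' hf hg := ⟨hf.1.mul hg.1, hf.2.mul hg.2⟩
  add_mem' hf hg := ⟨hf.1.add hg.1, hf.2.add hg.2⟩
  algebraMap_mem' _ := ⟨analyticOnNhd_const, fun _ ↦ rfl⟩

section PeriodicAnalytic

variable {f : ℝ → ℂ} {T : ℝ}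

lemma continuous_of_mem_periodicAnalytic (hf : f ∈ periodicAnalytic T) : Continuous f :=
  continuous_of_analyticOnNhd hf.1

lemma exists_norm_le_of_mem_periodicAnalytic (hT : T ≠ 0) (hf : f ∈ periodicAnalytic T) :
    ∃ C, ∀ x, ‖f x‖ ≤ C := by
  obtain ⟨C, hC⟩ :=
    (hf.2.isBounded_of_continuous hT (continuous_of_mem_periodicAnalytic hf)).exists_norm_le
  exact ⟨C, fun x ↦ hC _ (Set.mem_range_self x)⟩

lemma fourierKernel_mul_mem_periodicAnalytic {c : ℝ} {a : ℤ} (hc : c * T = a) :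
    (fun x ↦ fourierKernel (c * x)) ∈ periodicAnalytic T :=
  ⟨analyticOnNhd_fourierKernel_mul c, fun x ↦ by
    simp only [mul_add, fourierKernel_add, hc, fourierKernel_intCast, mul_one]⟩

lemma coe_toIcoMod (hT : 0 < T) (x : ℝ) : ((toIcoMod hT 0 x : ℝ) : AddCircle T) = x := by
  rw [toIcoMod, AddCircle.coe_sub, sub_eq_self]
  exact (AddCircle.coe_eq_zero_iff T).mpr ⟨_, rfl⟩

lemma eq_zero_of_mem_periodicAnalytic_of_injective_zeros (hT : 0 < T)
    (hf : f ∈ periodicAnalytic T) {z : ℕ → ℝ} (hz : ∀ n, f (z n) = 0)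
    (hinj : Function.Injective fun n ↦ (z n : AddCircle T)) : f = 0 := by
  set w : ℕ → ℝ := fun n ↦ toIcoMod hT 0 (z n)
  have hw_inj : Function.Injective w := fun m n hmn ↦ hinj <| by
    simpa only [w, coe_toIcoMod] using congrArg (fun x : ℝ ↦ (x : AddCircle T)) hmn
  have hw_zero : ∀ n, f (w n) = 0 := fun n ↦ by
    rw [← hz n]
    exact hf.2.sub_zsmul_eq _
  have hw_mem : Set.range w ⊆ Set.Icc 0 T := by
    rintro _ ⟨n, rfl⟩
    simpa using Set.Ico_subset_Icc_self (toIcoMod_mem_Ico hT 0 (z n))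
  obtain ⟨x, -, hx⟩ := (Set.infinite_range_of_injective hw_inj).exists_accPt_of_subset_isCompact
    isCompact_Icc hw_mem
  refine hf.1.eq_of_frequently_eq analyticOnNhd_const (z₀ := x) ?_
  refine (accPt_iff_frequently_nhdsNE.mp hx).mono ?_
  rintro _ ⟨n, rfl⟩
  exact hw_zero n

end PeriodicAnalytic

lemma exists_common_zero_of_periodic_of_tendsto {X : Type*} {G : X → ℝ → ℂ} {T : ℝ} (hT : 0 < T)
    (hcont : ∀ u, Continuous (G u)) (hper : ∀ u, Function.Periodic (G u) T) (y : ℕ → ℝ)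
    (hlim : ∀ u, Tendsto (fun n ↦ G u (y n)) atTop (𝓝 0)) : ∃ z, ∀ u, G u z = 0 := by
  have hmem : ∀ n, toIcoMod hT 0 (y n) ∈ Set.Icc 0 T := fun n ↦ by
    simpa using Set.Ico_subset_Icc_self (toIcoMod_mem_Ico hT 0 (y n))
  obtain ⟨z, -, σ, hσ, hz⟩ := isCompact_Icc.tendsto_subseq hmem
  refine ⟨z, fun u ↦ tendsto_nhds_unique (((hcont u).tendsto z).comp hz) ?_⟩
  refine ((hlim u).comp hσ.tendsto_atTop).congr fun n ↦ ?_
  exact ((hper u).sub_zsmul_eq (toIcoDiv hT 0 (y (σ n)))).symm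

/-- The algebra of trigonometric polynomials of period one, spanned by the `x ↦ e^{-2πinx}`. -/
noncomputable def trigPoly : Subalgebra ℂ (ℝ → ℂ) :=
  (Submodule.span ℂ (Set.range fun (n : ℤ) (x : ℝ) ↦ fourierKernel (n * x))).toSubalgebra
    (Submodule.subset_span ⟨0, by ext; simp⟩)
    fun f g hf hg ↦ by
      have hfg := Submodule.mul_mem_mul hf hg
      rw [Submodule.span_mul_span] at hfg
      refine Submodule.span_mono ?_ hfg
      rintro _ ⟨_, ⟨m, rfl⟩, _, ⟨n, rfl⟩, rfl⟩
      exact ⟨m + n, by ext; simp [add_mul, fourierKernel_add]⟩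

section TrigPoly

variable {f : ℝ → ℂ}

lemma fourierKernel_intCast_mul_mem_trigPoly (n : ℤ) :
    (fun x ↦ fourierKernel (n * x)) ∈ trigPoly :=
  Submodule.subset_span ⟨n, rfl⟩

lemma sum_mul_fourierKernel_mem_trigPoly {ι : Type*} (F : Finset ι) (a : ι → ℂ) (k : ι → ℤ) :
    (fun x ↦ ∑ i ∈ F, a i * fourierKernel (k i * x)) ∈ trigPoly := by
  have hsum : (fun x ↦ ∑ i ∈ F, a i * fourierKernel (k i * x)) =
      ∑ i ∈ F, a i • fun x : ℝ ↦ fourierKernel (k i * x) := by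
    ext x
    simp
  rw [hsum]
  exact sum_mem fun i _ ↦ trigPoly.smul_mem (fourierKernel_intCast_mul_mem_trigPoly _) _

lemma exists_eq_sum_of_mem_trigPoly (hf : f ∈ trigPoly) :
    ∃ (F : Finset ℤ) (a : ℤ → ℂ), f = fun x ↦ ∑ k ∈ F, a k * fourierKernel (k * x) := by
  obtain ⟨c, rfl⟩ := Finsupp.mem_span_range_iff_exists_finsupp.mp hf
  exact ⟨c.support, c, by ext; simp [Finsupp.sum]⟩

lemma trigPoly_le_periodicAnalytic (b : ℕ) : trigPoly ≤ periodicAnalytic b := by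
  refine (Submodule.span_le (p := Subalgebra.toSubmodule (periodicAnalytic b))).mpr ?_
  rintro _ ⟨n, rfl⟩
  exact fourierKernel_mul_mem_periodicAnalytic (a := n * b) (by push_cast; rfl)

lemma analyticOnNhd_of_mem_trigPoly (hf : f ∈ trigPoly) : AnalyticOnNhd ℝ f Set.univ :=
  (trigPoly_le_periodicAnalytic 1 hf).1

lemma continuous_of_mem_trigPoly (hf : f ∈ trigPoly) : Continuous f :=
  continuous_of_analyticOnNhd (analyticOnNhd_of_mem_trigPoly hf)

lemma trigPoly_add_intCast (hf : f ∈ trigPoly) (x : ℝ) (n : ℤ) : f (x + n) = f x := by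
  simpa using (trigPoly_le_periodicAnalytic 1 hf).2.int_mul n x

lemma trigPoly_add_one (hf : f ∈ trigPoly) (x : ℝ) : f (x + 1) = f x := by
  simpa using trigPoly_add_intCast hf x 1

lemma trigPoly_mul_ne_zero {g : ℝ → ℂ} (hf : f ∈ trigPoly) (hf0 : f ≠ 0) (hg : g ∈ trigPoly)
    (hg0 : g ≠ 0) : f * g ≠ 0 :=
  analytic_mul_ne_zero (analyticOnNhd_of_mem_trigPoly hf) hf0 (continuous_of_mem_trigPoly hg) hg0

lemma comp_add_right_mem_trigPoly (hf : f ∈ trigPoly) (y : ℝ) :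
    (fun x ↦ f (x + y)) ∈ trigPoly := by
  obtain ⟨F, a, rfl⟩ := exists_eq_sum_of_mem_trigPoly hf
  convert sum_mul_fourierKernel_mem_trigPoly F (fun k ↦ a k * fourierKernel (k * y)) id using 3
  rw [mul_add, fourierKernel_add, id]
  ring

lemma comp_natCast_mul_mem_trigPoly (hf : f ∈ trigPoly) (n : ℕ) :
    (fun x ↦ f (n * x)) ∈ trigPoly := by
  obtain ⟨F, a, rfl⟩ := exists_eq_sum_of_mem_trigPoly hf
  convert sum_mul_fourierKernel_mem_trigPoly F a (fun k ↦ k * n) using 5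
  push_cast
  ring

lemma comp_two_pow_mul_mem_trigPoly (hf : f ∈ trigPoly) (n : ℕ) :
    (fun x ↦ f (2 ^ n * x)) ∈ trigPoly := by
  simpa using comp_natCast_mul_mem_trigPoly hf (2 ^ n)

/- Averaging over the half-period kills the odd frequencies. -/
lemma comp_div_two_mem_trigPoly (hf : f ∈ trigPoly) (hper : Function.Periodic f (1 / 2)) :
    (fun x ↦ f (x / 2)) ∈ trigPoly := by
  obtain ⟨F, a, h⟩ := exists_eq_sum_of_mem_trigPoly hf
  have hfreq : ∀ (k : ℤ) (x : ℝ), (fourierKernel (k * (x / 2)) +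
      fourierKernel (k * (x / 2 + 1 / 2))) / 2 =
        (if Even k then 1 else 0) * fourierKernel ((k / 2 : ℤ) * x) := by
    intro k x
    rw [mul_add, fourierKernel_add]
    rcases Int.even_or_odd' k with ⟨l, rfl | rfl⟩
    · have hshift : ((2 * l : ℤ) : ℝ) * (1 / 2) = (l : ℤ) := by push_cast; ring
      have hhalf : ((2 * l : ℤ) : ℝ) * (x / 2) = l * x := by push_cast; ring
      rw [hshift, hhalf, fourierKernel_intCast, if_pos (even_two_mul l),
        Int.mul_ediv_cancel_left l two_ne_zero]
      ring
    · have hshift : ((2 * l + 1 : ℤ) : ℝ) * (1 / 2) = (l : ℤ) + 1 / 2 := by push_cast; ring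
      rw [hshift, fourierKernel_add, fourierKernel_intCast, fourierKernel_half,
        if_neg (by simp)]
      ring
  convert sum_mul_fourierKernel_mem_trigPoly F (fun k ↦ a k * if Even k then 1 else 0)
    (fun k ↦ k / 2) using 2 with x
  calc f (x / 2) = (f (x / 2) + f (x / 2 + 1 / 2)) / 2 := by rw [hper]; ring
    _ = ∑ k ∈ F, a k * ((fourierKernel (k * (x / 2)) +
          fourierKernel (k * (x / 2 + 1 / 2))) / 2) := by
        simp only [h, ← Finset.sum_add_distrib, Finset.sum_div]
        exact Finset.sum_congr rfl fun k _ ↦ by ring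
    _ = _ := Finset.sum_congr rfl fun k _ ↦ by rw [hfreq]; ring

end TrigPoly

/-! ### The one-dimensional Fourier transform -/

section Fourier

variable {f : ℝ → ℂ}

lemma fourier_eq_integral_fourierKernel (f : ℝ → ℂ) (ξ : ℝ) :
    𝓕 f ξ = ∫ x : ℝ, fourierKernel (x * ξ) * f x :=
  Real.fourier_real_eq f ξ

lemma eq_zero_of_fourier_eq_zero (hcont : Continuous f) (hint : Integrable f) (h : 𝓕 f = 0) :
    f = 0 := by
  have hinv := hcont.fourierInv_fourier_eq hint (by rw [h]; exact integrable_zero _ _ _)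
  rw [← hinv, h]
  ext x
  simp [Real.fourierInv_eq]

lemma norm_cexp_neg_two_pi_mul_le {x M R : ℝ} {z : ℂ} (hx : |x| ≤ M) (hz : ‖z‖ ≤ R) :
    ‖Complex.exp ((-2 * Real.pi * x : ℝ) * z * Complex.I)‖ ≤ Real.exp (2 * Real.pi * M * R) := by
  rw [Complex.norm_exp]
  refine Real.exp_le_exp.mpr ((Complex.re_le_norm _).trans ?_)
  have hM : 0 ≤ M := (abs_nonneg x).trans hx
  rw [norm_mul, norm_mul, Complex.norm_I, mul_one, Complex.norm_real, Real.norm_eq_abs, abs_mul,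
    abs_mul, abs_neg, abs_two, abs_of_pos Real.pi_pos]
  gcongr

lemma differentiable_integral_cexp_mul (hint : Integrable f) (hsupp : HasCompactSupport f) :
    Differentiable ℂ fun z : ℂ ↦
      ∫ x : ℝ, Complex.exp ((-2 * Real.pi * x : ℝ) * z * Complex.I) * f x := by
  intro z₀
  obtain ⟨M, hM⟩ := hsupp.isCompact.isBounded.exists_norm_le
  have hMf : ∀ x, f x ≠ 0 → |x| ≤ M := fun x hx ↦ hM x (subset_tsupport f hx)
  set C : ℝ := Real.exp (2 * Real.pi * M * (‖z₀‖ + 1))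
  have hexp : ∀ z ∈ Metric.ball z₀ 1, ∀ x, f x ≠ 0 →
      ‖Complex.exp ((-2 * Real.pi * x : ℝ) * z * Complex.I)‖ ≤ C := fun z hz x hx ↦ by
    refine norm_cexp_neg_two_pi_mul_le (hMf x hx) ?_
    rw [mem_ball_iff_norm] at hz
    linarith [norm_le_norm_add_norm_sub' z z₀]
  have hmeas : ∀ z : ℂ, AEStronglyMeasurable
      (fun x : ℝ ↦ Complex.exp ((-2 * Real.pi * x : ℝ) * z * Complex.I) * f x) := fun z ↦
    (Continuous.aestronglyMeasurable (by fun_prop)).mul hint.1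
  refine (hasDerivAt_integral_of_dominated_loc_of_deriv_le (μ := volume)
    (F := fun (z : ℂ) (x : ℝ) ↦ Complex.exp ((-2 * Real.pi * x : ℝ) * z * Complex.I) * f x)
    (F' := fun (z : ℂ) (x : ℝ) ↦ Complex.exp ((-2 * Real.pi * x : ℝ) * z * Complex.I) *
      ((-2 * Real.pi * x : ℝ) * Complex.I) * f x)
    (bound := fun x ↦ C * (2 * Real.pi * M) * ‖f x‖) (Metric.ball_mem_nhds z₀ one_pos)
    (Eventually.of_forall hmeas) ?_ ?_ ?_ (hint.norm.const_mul _) ?_).2.differentiableAt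
  · refine (hint.norm.const_mul C).mono' (hmeas z₀) (Eventually.of_forall fun x ↦ ?_)
    rcases eq_or_ne (f x) 0 with hx | hx
    · simp [hx]
    · rw [norm_mul]
      gcongr
      exact hexp z₀ (Metric.mem_ball_self one_pos) x hx
  · exact (Continuous.aestronglyMeasurable (by fun_prop)).mul hint.1
  · refine Eventually.of_forall fun x z hz ↦ ?_
    rcases eq_or_ne (f x) 0 with hx | hx
    · simp [hx]
    · rw [norm_mul, norm_mul, norm_mul _ Complex.I, Complex.norm_I, mul_one, Complex.norm_real,
        Real.norm_eq_abs, abs_mul, abs_mul, abs_neg, abs_two, abs_of_pos Real.pi_pos]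
      gcongr
      · exact hexp z hz x hx
      · exact hMf x hx
  · refine Eventually.of_forall fun x z _ ↦ HasDerivAt.mul_const (HasDerivAt.cexp ?_) (f x)
    simpa using ((hasDerivAt_id z).const_mul ((-2 * Real.pi * x : ℝ) : ℂ)).mul_const Complex.I

lemma analyticOnNhd_fourier (hint : Integrable f) (hsupp : HasCompactSupport f) :
    AnalyticOnNhd ℝ (𝓕 f) Set.univ := by
  intro ξ _
  have hcomplex := ((differentiable_integral_cexp_mul hint hsupp).analyticAt
    (ξ : ℂ)).restrictScalars (𝕜 := ℝ)
  convert hcomplex.comp_of_eq (Complex.ofRealCLM.analyticAt ξ) rfl using 1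
  ext w
  simp only [fourier_eq_integral_fourierKernel, fourierKernel_eq_cexp, Function.comp_apply,
    Complex.ofRealCLM_apply]
  congr! 4
  push_cast
  ring

lemma fourier_comp_mul_sub (f : ℝ → ℂ) {a : ℝ} (ha : 0 < a) (b ξ : ℝ) :
    𝓕 (fun x ↦ f (a * x - b)) ξ = a⁻¹ * (fourierKernel (b * (ξ / a)) * 𝓕 f (ξ / a)) := by
  simp only [fourier_eq_integral_fourierKernel]
  set g : ℝ → ℂ := fun y ↦
    fourierKernel (b * (ξ / a)) * (fourierKernel ((y - b) * (ξ / a)) * f (y - b)) with hg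
  calc ∫ x, fourierKernel (x * ξ) * f (a * x - b) = ∫ x, g (a * x) := by
        congr 1 with x
        simp only [hg, ← mul_assoc, ← fourierKernel_add]
        congr 2
        field_simp
        ring
    _ = a⁻¹ * (fourierKernel (b * (ξ / a)) * ∫ y, fourierKernel (y * (ξ / a)) * f y) := by
        rw [Measure.integral_comp_mul_left, hg, integral_const_mul,
          integral_sub_right_eq_self (fun y ↦ fourierKernel (y * (ξ / a)) * f y) b,
          abs_of_pos (inv_pos.mpr ha), Complex.real_smul, Complex.ofReal_inv]

lemma fourier_sum_mul {ι : Type*} (F : Finset ι) (c : ι → ℂ) {f : ι → ℝ → ℂ}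
    (hint : ∀ i ∈ F, Integrable (f i)) (ξ : ℝ) :
    𝓕 (fun x ↦ ∑ i ∈ F, c i * f i x) ξ = ∑ i ∈ F, c i * 𝓕 (f i) ξ := by
  simp only [Real.fourier_real_eq, Finset.smul_sum]
  rw [integral_finsetSum]
  · refine Finset.sum_congr rfl fun i _ ↦ ?_
    rw [← integral_const_mul]
    congr 1 with x
    exact (mul_smul_comm _ _ _).symm
  · intro i hi
    simpa only [RCLike.inner_apply, conj_trivial, mul_comm _ ξ] using
      (Real.fourierIntegral_convergent_iff ξ).mpr ((hint i hi).const_mul (c i))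

lemma fourier_sub {f g : ℝ → ℂ} (hf : Integrable f) (hg : Integrable g) (ξ : ℝ) :
    𝓕 (f - g) ξ = 𝓕 f ξ - 𝓕 g ξ := by
  rw [Pi.sub_def]
  simpa [sub_eq_add_neg] using fourier_sum_mul (f := ![f, g]) Finset.univ ![1, -1]
    (by simp [Fin.forall_fin_two, hf, hg]) ξ

lemma linearIndependent_fourier {ι : Type*} {f : ι → ℝ → ℂ} (hf : LinearIndependent ℂ f)
    (hcont : ∀ i, Continuous (f i)) (hint : ∀ i, Integrable (f i)) :
    LinearIndependent ℂ fun i ↦ 𝓕 (f i) := by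
  rw [linearIndependent_iff'] at hf ⊢
  intro F c hsum
  refine hf F c ?_
  have hcomb : ∑ i ∈ F, c i • f i = fun x ↦ ∑ i ∈ F, c i * f i x := by
    ext x
    simp
  rw [hcomb]
  refine eq_zero_of_fourier_eq_zero (by fun_prop)
    (integrable_finsetSum _ fun i _ ↦ (hint i).const_mul _) ?_
  ext ξ
  rw [fourier_sum_mul F c fun i _ ↦ hint i]
  simpa using congrFun hsum ξ

end Fourier

lemma hasCompactSupport_comp_mul_sub {E : Type*} [Zero E] {f : ℝ → E} (hf : HasCompactSupport f)
    {a : ℝ} (ha : a ≠ 0) (b : ℝ) : HasCompactSupport fun x ↦ f (a * x - b) :=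
  hf.comp_homeomorph ((Homeomorph.mulLeft₀ a ha).trans (Homeomorph.subRight b))

/-- The Fourier-side atom `ξ ↦ e^{-2πi c m ξ/2^j} f(ξ/2^j)`. When `f` is the Fourier transform
of `g`, it is the Fourier transform of `x ↦ 2^j g(2^j x - c m)`. -/
noncomputable def atomHat (f : ℝ → ℂ) (c : ℝ) (j : ℕ) (m : ℤ) (ξ : ℝ) : ℂ :=
  fourierKernel (c * m * (ξ / 2 ^ j)) * f (ξ / 2 ^ j)

lemma continuous_atomHat {f : ℝ → ℂ} (hf : Continuous f) (c : ℝ) (j : ℕ) (m : ℤ) :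
    Continuous (atomHat f c j m) := by
  unfold atomHat
  fun_prop

lemma fourier_comp_two_pow_mul_sub (f : ℝ → ℂ) (c : ℝ) (j : ℕ) (m : ℤ) :
    𝓕 (fun x ↦ f (2 ^ j * x - c * m)) = ((2 : ℂ) ^ j)⁻¹ • atomHat (𝓕 f) c j m := by
  ext ξ
  rw [fourier_comp_mul_sub f (by positivity)]
  simp [atomHat]

lemma linearIndependent_atomHat_fourier {f : ℝ → ℂ} {c : ℝ} (hcont : Continuous f)
    (hsupp : HasCompactSupport f)
    (hf : LinearIndependent ℂ fun (p : ℕ × ℤ) (x : ℝ) ↦ f (2 ^ p.1 * x - c * p.2)) :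
    LinearIndependent ℂ fun p : ℕ × ℤ ↦ atomHat (𝓕 f) c p.1 p.2 := by
  have hdual := linearIndependent_fourier hf (fun p ↦ by fun_prop) fun p ↦
    Continuous.integrable_of_hasCompactSupport (by fun_prop)
      (hasCompactSupport_comp_mul_sub hsupp (by positivity) _)
  refine (LinearIndependent.units_smul_iff _ fun p : ℕ × ℤ ↦
    (Units.mk0 ((2 : ℂ) ^ p.1) (by simp))⁻¹).mp ?_
  convert hdual using 2 with p
  exact (fourier_comp_two_pow_mul_sub f c p.1 p.2).symm

lemma linearIndependent_fourierKernel_mul {c : ℝ} (hc : c ≠ 0) :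
    LinearIndependent ℂ fun (m : ℤ) (ξ : ℝ) ↦ fourierKernel (c * m * ξ) := by
  let character (m : ℤ) : Multiplicative ℝ →* ℂ :=
    { toFun ξ := fourierKernel (c * m * ξ.toAdd)
      map_one' := by simp
      map_mul' ξ η := by simp [mul_add, fourierKernel_add] }
  have hinj : Function.Injective character := fun m n hmn ↦ by
    by_contra hne
    have hsub : (m - n : ℝ) ≠ 0 := sub_ne_zero.mpr (Int.cast_injective.ne hne)
    set ξ : ℝ := 1 / 2 / (c * (m - n))
    have hξ : c * m * ξ = c * n * ξ + 1 / 2 := by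
      simp only [ξ]
      field_simp
      ring
    have heq : fourierKernel (c * m * ξ) = fourierKernel (c * n * ξ) :=
      DFunLike.congr_fun hmn (Multiplicative.ofAdd ξ)
    rw [hξ, fourierKernel_add, fourierKernel_half, mul_neg_one, neg_eq_self] at heq
    exact fourierKernel_ne_zero _ heq
  exact (linearIndependent_monoidHom (Multiplicative ℝ) ℂ).comp character hinj

lemma linearIndependent_atomHat_of_analytic {f : ℝ → ℂ} (hf : AnalyticOnNhd ℝ f Set.univ)
    (hf0 : f ≠ 0) {c : ℝ} (hc : c ≠ 0) (j : ℕ) : LinearIndependent ℂ (atomHat f c j) := by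
  have hkernel := linearIndependent_fourierKernel_mul (c := c / 2 ^ j) (by positivity)
  rw [linearIndependent_iff'] at hkernel ⊢
  intro F a hsum
  refine hkernel F a (eq_zero_of_analytic_mul_eq_zero (f := fun ξ ↦ f ((2 ^ j)⁻¹ * ξ))
    (analyticOnNhd_comp_mul_left hf _) (comp_mul_left_ne_zero hf0 (by positivity)) ?_ ?_)
  · simp only [Finset.sum_fn, Pi.smul_def, smul_eq_mul]
    fun_prop
  · intro ξ
    refine Eq.trans ?_ (congrFun hsum ξ)
    simp only [Finset.sum_apply, Pi.smul_apply, smul_eq_mul, Finset.mul_sum, atomHat]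
    refine Finset.sum_congr rfl fun m _ ↦ ?_
    rw [inv_mul_eq_div, show c / 2 ^ j * m * ξ = c * m * (ξ / 2 ^ j) by ring]
    ring

/-! ### Finite expansions in orthogonal families -/

lemma mem_span_image_of_mem_closure_span {𝕜 H ι : Type*} [RCLike 𝕜] [NormedAddCommGroup H]
    [InnerProductSpace 𝕜 H] {e : ι → H} (he : Pairwise fun k l ↦ inner 𝕜 (e k) (e l) = 0)
    {v : H} {s : Set ι} (hs : s.Finite) (hv : ∀ k ∉ s, inner 𝕜 (e k) v = 0)
    (hmem : v ∈ (Submodule.span 𝕜 (Set.range e)).topologicalClosure) :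
    v ∈ Submodule.span 𝕜 (e '' s) := by
  set W := Submodule.span 𝕜 (Set.range e)
  set K := Submodule.span 𝕜 (e '' s)
  have hKW : K ≤ W := Submodule.span_mono (Set.image_subset_range e s)
  have : FiniteDimensional 𝕜 K := FiniteDimensional.span_of_finite 𝕜 (hs.image e)
  set g := v - K.starProjection v
  have hgK : g ∈ Kᗮ := K.sub_starProjection_mem_orthogonal v
  have hgW : g ∈ W.topologicalClosure :=
    sub_mem hmem (W.le_topologicalClosure (hKW (K.starProjection_apply_mem v)))
  have hgWorth : g ∈ W.topologicalClosureᗮ := by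
    rw [Submodule.orthogonal_closure, ← Submodule.span_singleton_le_iff_mem,
      ← Submodule.isOrtho_iff_le, Submodule.isOrtho_comm, Submodule.isOrtho_span]
    rintro _ ⟨k, rfl⟩ _ rfl
    by_cases hk : k ∈ s
    · exact hgK _ (Submodule.subset_span (Set.mem_image_of_mem e hk))
    · have hekK : K ≤ (𝕜 ∙ e k)ᗮ := Submodule.span_le.mpr <| by
        rintro _ ⟨l, hl, rfl⟩
        exact Submodule.mem_orthogonal_singleton_iff_inner_right.mpr (he (by grind))
      rw [inner_sub_right, hv k hk, Submodule.mem_orthogonal_singleton_iff_inner_right.mp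
        (hekK (K.starProjection_apply_mem v)), sub_zero]
  have hg : g = 0 := by
    simpa using Submodule.inner_right_of_mem_orthogonal hgW hgWorth
  rw [sub_eq_zero.mp hg]
  exact K.starProjection_apply_mem v

lemma inner_toLp {α : Type*} [MeasurableSpace α] {μ : Measure α} {f g : α → ℂ} (hf : MemLp f 2 μ)
    (hg : MemLp g 2 μ) :
    inner ℂ (hf.toLp f) (hg.toLp g) = ∫ x, (starRingEnd ℂ) (f x) * g x ∂μ := by
  rw [L2.inner_def]
  refine integral_congr_ae ?_
  filter_upwards [hf.coeFn_toLp, hg.coeFn_toLp] with x hfx hgx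
  rw [hfx, hgx, RCLike.inner_apply, mul_comm]

lemma toLp_sum_mul {α ι : Type*} [MeasurableSpace α] {μ : Measure α} {e : ι → α → ℂ}
    (he : ∀ i, MemLp (e i) 2 μ) (F : Finset ι) (a : ι → ℂ)
    (hsum : MemLp (fun x ↦ ∑ i ∈ F, a i * e i x) 2 μ) :
    hsum.toLp = ∑ i ∈ F, a i • (he i).toLp := by
  classical
  induction F using Finset.induction_on with
  | empty =>
    simp only [Finset.sum_empty]
    exact MemLp.toLp_zero _
  | insert i s hi ih =>
    rw [Finset.sum_insert hi, ← ih (memLp_finsetSum s fun k _ ↦ (he k).const_mul (a k)),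
      ← MemLp.toLp_const_smul, ← MemLp.toLp_add]
    refine MemLp.toLp_congr _ _ (Eventually.of_forall fun x ↦ ?_)
    simp [Finset.sum_insert hi]

lemma exists_eq_sum_of_orthogonal_of_approx {α ι : Type*} [TopologicalSpace α] [MeasurableSpace α]
    {μ : Measure α} [μ.IsOpenPosMeasure] {e : ι → α → ℂ} {f : α → ℂ} (hec : ∀ k, Continuous (e k))
    (he : ∀ k, MemLp (e k) 2 μ) (hfc : Continuous f) (hf : MemLp f 2 μ)
    (horth : Pairwise fun k l ↦ ∫ x, (starRingEnd ℂ) (e k x) * e l x ∂μ = 0)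
    {s : Set ι} (hs : s.Finite) (hs0 : ∀ k ∉ s, ∀ x, (starRingEnd ℂ) (e k x) * f x = 0)
    (happrox : ∀ ε : ℝ, 0 < ε → ∃ (F : Finset ι) (a : ι → ℂ),
      eLpNorm (fun x ↦ f x - ∑ k ∈ F, a k * e k x) 2 μ < ENNReal.ofReal ε) :
    ∃ (F : Finset ι) (a : ι → ℂ), f = fun x ↦ ∑ k ∈ F, a k * e k x := by
  have hsum (F : Finset ι) (a : ι → ℂ) : MemLp (fun x ↦ ∑ k ∈ F, a k * e k x) 2 μ :=
    memLp_finsetSum F fun k _ ↦ (he k).const_mul (a k)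
  have hclosure : hf.toLp ∈
      (Submodule.span ℂ (Set.range fun k ↦ (he k).toLp)).topologicalClosure := by
    refine Metric.mem_closure_iff.mpr fun ε hε ↦ ?_
    obtain ⟨F, a, hFa⟩ := happrox ε hε
    refine ⟨∑ k ∈ F, a k • (he k).toLp,
      sum_mem fun k _ ↦ Submodule.smul_mem _ _ (Submodule.subset_span ⟨k, rfl⟩), ?_⟩
    rw [dist_eq_norm, ← toLp_sum_mul he F a (hsum F a), ← MemLp.toLp_sub, Lp.norm_toLp]
    exact ENNReal.toReal_lt_of_lt_ofReal hFa
  have hspan := mem_span_image_of_mem_closure_span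
    (fun k l hkl ↦ (inner_toLp (he k) (he l)).trans (horth hkl)) hs
    (fun k hk ↦ by rw [inner_toLp]; simp [hs0 k hk]) hclosure
  obtain ⟨a, -, ha⟩ := (Finsupp.mem_span_image_iff_linearCombination ℂ).mp hspan
  refine ⟨a.support, a, (hfc.ae_eq_iff_eq μ (by fun_prop)).mp ?_⟩
  rwa [Finsupp.linearCombination_apply, Finsupp.sum, ← toLp_sum_mul he _ a (hsum _ a), eq_comm,
    MemLp.toLp_eq_toLp_iff] at ha

lemma finite_setOf_translate_mul_ne_zero {f g : ℝ → ℂ} (hf : HasCompactSupport f)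
    (hg : HasCompactSupport g) (a : ℝ) :
    {k : ℤ | ∃ x, f (a * x - k) * g x ≠ 0}.Finite := by
  obtain ⟨M, hM⟩ := hf.isCompact.isBounded.exists_norm_le
  obtain ⟨N, hN⟩ := hg.isCompact.isBounded.exists_norm_le
  refine (Set.finite_Icc (-⌈|a| * N + M⌉) ⌈|a| * N + M⌉).subset ?_
  rintro k ⟨x, hx⟩
  have hfx : |a * x - k| ≤ M := hM _ (subset_tsupport f (left_ne_zero_of_mul hx))
  have hgx : |x| ≤ N := hN _ (subset_tsupport g (right_ne_zero_of_mul hx))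
  have hk : |(k : ℝ)| ≤ |a| * N + M := calc
    |(k : ℝ)| = |a * x - (a * x - k)| := by ring_nf
    _ ≤ |a * x| + |a * x - k| := abs_sub _ _
    _ ≤ |a| * N + M := by rw [abs_mul]; gcongr
  have hceil : |(k : ℝ)| ≤ ⌈|a| * N + M⌉ := hk.trans (Int.le_ceil _)
  exact abs_le.mp (by exact_mod_cast hceil)

lemma exists_eq_sum_translates_of_approx {φ f : ℝ → ℂ} (hφc : Continuous φ)
    (hφs : HasCompactSupport φ)
    (hφorth : Pairwise fun m n : ℤ ↦ ∫ x : ℝ, (starRingEnd ℂ) (φ (x - m)) * φ (x - n) = 0)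
    (hfc : Continuous f) (hfs : HasCompactSupport f) {a : ℝ} (ha : a ≠ 0)
    (happrox : ∀ ε : ℝ, 0 < ε → ∃ (F : Finset ℤ) (c : ℤ → ℂ),
      eLpNorm (fun x : ℝ ↦ f x - ∑ k ∈ F, c k * φ (a * x - k)) 2 volume < ENNReal.ofReal ε) :
    ∃ (F : Finset ℤ) (c : ℤ → ℂ), f = fun x ↦ ∑ k ∈ F, c k * φ (a * x - k) := by
  refine exists_eq_sum_of_orthogonal_of_approx (e := fun (k : ℤ) x ↦ φ (a * x - k))
    (fun k ↦ by fun_prop) (fun k ↦ Continuous.memLp_of_hasCompactSupport (by fun_prop)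
      (hasCompactSupport_comp_mul_sub hφs ha k)) hfc (hfc.memLp_of_hasCompactSupport hfs) ?_
    (finite_setOf_translate_mul_ne_zero hφs hfs a) ?_ happrox
  · intro k l hkl
    rw [Measure.integral_comp_mul_left (fun x ↦ (starRingEnd ℂ) (φ (x - k)) * φ (x - l)) a,
      hφorth hkl, smul_zero]
  · intro k hk x
    by_contra hx
    exact hk ⟨x, by simpa using hx⟩

/-! ### The refinement relations -/

/-- Fourier-side data of a scaling function and a wavelet: `p` and `q` are the transforms of
`φ` and `ψ`, and the trigonometric polynomials `A` and `E` express that `ψ` is a finite combination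
of the `φ(2 x - k)` and of the `φ(4 x - k)`, that is, `ψ ∈ V₁` and `ψ ∈ V₂`. -/
structure RefinablePair (p q A E : ℝ → ℂ) : Prop where
  analytic_scaling : AnalyticOnNhd ℝ p Set.univ
  analytic_wavelet : AnalyticOnNhd ℝ q Set.univ
  scaling_ne_zero : p ≠ 0
  wavelet_ne_zero : q ≠ 0
  tendsto_scaling : Tendsto p (cocompact ℝ) (𝓝 0)
  mem_trigPoly_left : A ∈ trigPoly
  mem_trigPoly_right : E ∈ trigPoly
  wavelet_two_mul : ∀ v, q (2 * v) = A v * p v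
  wavelet_four_mul : ∀ v, q (4 * v) = E v * p v

/-- A function clearing the denominators of the dilates `p(2^j ·)`, `j ≤ N`, relative to `p`. -/
structure IsCommonDenominator (p D : ℝ → ℂ) (N : ℕ) : Prop where
  mem_trigPoly : D ∈ trigPoly
  ne_zero : D ≠ 0
  exists_mul_eq : ∀ j ≤ N, ∃ T ∈ trigPoly, ∀ v, D v * p (2 ^ j * v) = T v * p v

namespace RefinablePair

variable {p q A E : ℝ → ℂ} (h : RefinablePair p q A E)

include h

lemma continuous_scaling : Continuous p := continuous_of_analyticOnNhd h.analytic_scaling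

lemma continuous_wavelet : Continuous q := continuous_of_analyticOnNhd h.analytic_wavelet

lemma left_ne_zero : A ≠ 0 := by
  rintro rfl
  exact comp_mul_left_ne_zero h.wavelet_ne_zero two_ne_zero
    (funext fun v ↦ by simp [h.wavelet_two_mul v])

lemma right_ne_zero : E ≠ 0 := by
  rintro rfl
  exact comp_mul_left_ne_zero h.wavelet_ne_zero four_ne_zero
    (funext fun v ↦ by simp [h.wavelet_four_mul v])

lemma mul_scaling_two_mul (v : ℝ) : A (2 * v) * p (2 * v) = E v * p v := by
  rw [← h.wavelet_two_mul, ← h.wavelet_four_mul, ← mul_assoc]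
  norm_num

lemma exists_isCommonDenominator (N : ℕ) : ∃ D, IsCommonDenominator p D N := by
  induction N with
  | zero =>
    refine ⟨1, one_mem _, one_ne_zero, fun j hj ↦ ⟨1, one_mem _, fun v ↦ ?_⟩⟩
    simp [Nat.le_zero.mp hj]
  | succ N ih =>
    obtain ⟨D, hD, hD0, hT⟩ := ih
    have hA : (fun v ↦ A (2 ^ (N + 1) * v)) ∈ trigPoly :=
      comp_two_pow_mul_mem_trigPoly h.mem_trigPoly_left (N + 1)
    refine ⟨_, mul_mem hA hD, trigPoly_mul_ne_zero hA
      (comp_mul_left_ne_zero h.left_ne_zero (by positivity)) hD hD0, fun j hj ↦ ?_⟩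
    rcases Nat.of_le_succ hj with hjN | rfl
    · obtain ⟨T, hT, hrel⟩ := hT j hjN
      refine ⟨_, mul_mem hA hT, fun v ↦ ?_⟩
      simp only [Pi.mul_apply, mul_assoc, hrel v]
    · obtain ⟨T, hT, hrel⟩ := hT N le_rfl
      refine ⟨_, mul_mem (comp_two_pow_mul_mem_trigPoly h.mem_trigPoly_right N) hT, fun v ↦ ?_⟩
      have hdouble : (2 : ℝ) ^ (N + 1) * v = 2 * (2 ^ N * v) := by ring
      simp only [Pi.mul_apply, hdouble]
      linear_combination D v * h.mul_scaling_two_mul (2 ^ N * v) + E (2 ^ N * v) * hrel v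

lemma scaling_two_pow_mul_add_intCast (n : ℕ) (m : ℤ) (x : ℝ) :
    p (2 ^ n * (x + m)) * p x = p (2 ^ n * x) * p (x + m) := by
  obtain ⟨D, hD, hD0, hT⟩ := h.exists_isCommonDenominator n
  obtain ⟨T, hT, hrel⟩ := hT n le_rfl
  have hp := h.continuous_scaling
  have hzero := eq_zero_of_analytic_mul_eq_zero (analyticOnNhd_of_mem_trigPoly hD) hD0
    (g := fun x ↦ p (2 ^ n * (x + m)) * p x - p (2 ^ n * x) * p (x + m)) (by fun_prop) fun x ↦ by
      have hshift := hrel (x + m)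
      rw [trigPoly_add_intCast hD, trigPoly_add_intCast hT] at hshift
      linear_combination p x * hshift - p (x + m) * hrel x
  exact sub_eq_zero.mp (congrFun hzero x)

/- Both `q` and `p` at `2 w` are multiples of `p w`, and moving `w` by half of an odd period turns
the relation into a second one; the determinant of the two eliminates `Q`. -/
lemma eq_zero_of_periodic_combination (hdet : ∃ w, A w * E (w + 1 / 2) ≠ A (w + 1 / 2) * E w)
    {b : ℕ} (hb : Odd b) {P Q : ℝ → ℂ} (hP : Continuous P) (hQ : Continuous Q)
    (hPper : Function.Periodic P b) (hQper : Function.Periodic Q b)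
    (hrel : ∀ v, P v * q v + Q v * p v = 0) : P = 0 := by
  have hA := continuous_of_mem_trigPoly h.mem_trigPoly_left
  have hE := continuous_of_mem_trigPoly h.mem_trigPoly_right
  have hdouble : ∀ w, P (2 * w) * A w * A (2 * w) + Q (2 * w) * E w = 0 := by
    refine congrFun (eq_zero_of_analytic_mul_eq_zero h.analytic_scaling h.scaling_ne_zero
      (by fun_prop) fun w ↦ ?_)
    have hrel_double := hrel (2 * w)
    rw [h.wavelet_two_mul w] at hrel_double
    linear_combination A (2 * w) * hrel_double - Q (2 * w) * h.mul_scaling_two_mul w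
  obtain ⟨c, rfl⟩ := hb
  have hhalf : ∀ w, P (2 * w) * A (w + 1 / 2) * A (2 * w) + Q (2 * w) * E (w + 1 / 2) = 0 := by
    intro w
    have hdouble_half := hdouble (w + 1 / 2 + (c : ℤ))
    have hodd : 2 * (w + 1 / 2 + ((c : ℤ) : ℝ)) = 2 * w + ((2 * c + 1 : ℕ) : ℤ) := by
      push_cast
      ring
    rwa [hodd, trigPoly_add_intCast h.mem_trigPoly_left, trigPoly_add_intCast h.mem_trigPoly_left,
      trigPoly_add_intCast h.mem_trigPoly_right, Int.cast_natCast, hPper, hQper] at hdouble_half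
  have hAP : (fun v ↦ A v * P v) = 0 := by
    by_contra hne
    refine comp_mul_left_ne_zero hne two_ne_zero (eq_zero_of_analytic_mul_eq_zero
      (f := fun w ↦ A w * E (w + 1 / 2) - A (w + 1 / 2) * E w) ?_ ?_ (by fun_prop) fun w ↦ ?_)
    · have hA' := comp_add_right_mem_trigPoly h.mem_trigPoly_left (1 / 2)
      have hE' := comp_add_right_mem_trigPoly h.mem_trigPoly_right (1 / 2)
      exact analyticOnNhd_of_mem_trigPoly (sub_mem (mul_mem h.mem_trigPoly_left hE')
        (mul_mem hA' h.mem_trigPoly_right))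
    · obtain ⟨w, hw⟩ := hdet
      exact Function.ne_iff.mpr ⟨w, sub_ne_zero.mpr hw⟩
    · linear_combination E (w + 1 / 2) * hdouble w - E w * hhalf w
  exact eq_zero_of_analytic_mul_eq_zero (analyticOnNhd_of_mem_trigPoly h.mem_trigPoly_left)
    h.left_ne_zero hP (congrFun hAP)

end RefinablePair

/-- The functions of the form `ξ ↦ (g p / D)(ξ / 2^J)` with `g` analytic of period `b`. It replaces
the approximation space `V_J` when the translations are not integral. -/
def approxSpace (p D : ℝ → ℂ) (b : ℝ) (J : ℕ) : Submodule ℂ (ℝ → ℂ) where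
  carrier := {f | ∃ g ∈ periodicAnalytic b, ∀ v, D v * f (2 ^ J * v) = g v * p v}
  add_mem' := by
    rintro f₁ f₂ ⟨g₁, hg₁, hf₁⟩ ⟨g₂, hg₂, hf₂⟩
    exact ⟨g₁ + g₂, add_mem hg₁ hg₂, fun v ↦ by
      simp only [Pi.add_apply, mul_add, add_mul, hf₁, hf₂]⟩
  zero_mem' := ⟨0, zero_mem _, fun v ↦ by simp⟩
  smul_mem' := by
    rintro a f ⟨g, hg, hf⟩
    exact ⟨a • g, Subalgebra.smul_mem _ hg a, fun v ↦ by
      simp only [Pi.smul_apply, smul_eq_mul, mul_left_comm, hf, mul_assoc]⟩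

section ApproxSpace

variable {p q A E D : ℝ → ℂ} {c : ℝ} {b J j : ℕ} {a : ℤ}

lemma atomHat_two_pow_mul (hj : j ≤ J) (f : ℝ → ℂ) (c : ℝ) (m : ℤ) (v : ℝ) :
    atomHat f c j m (2 ^ J * v) =
      fourierKernel (c * m * 2 ^ (J - j) * v) * f (2 ^ (J - j) * v) := by
  have hscale : (2 : ℝ) ^ J * v / 2 ^ j = 2 ^ (J - j) * v := by
    rw [pow_sub₀ _ two_ne_zero hj]
    ring
  rw [atomHat, hscale, mul_assoc (c * m)]

lemma fourierKernel_dilated_mem_periodicAnalytic (hc : c * b = a) (m : ℤ) (n : ℕ) :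
    (fun v ↦ fourierKernel (c * m * 2 ^ n * v)) ∈ periodicAnalytic b :=
  fourierKernel_mul_mem_periodicAnalytic (a := a * m * 2 ^ n) <| by
    push_cast
    linear_combination (m : ℝ) * 2 ^ n * hc

lemma atomHat_scaling_mem_approxSpace (hD : IsCommonDenominator p D J) (hc : c * b = a)
    (hj : j ≤ J) (m : ℤ) : atomHat p c j m ∈ approxSpace p D b J := by
  obtain ⟨T, hT, hrel⟩ := hD.exists_mul_eq (J - j) (Nat.sub_le J j)
  refine ⟨_, mul_mem (fourierKernel_dilated_mem_periodicAnalytic hc m (J - j))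
    (trigPoly_le_periodicAnalytic b hT), fun v ↦ ?_⟩
  rw [atomHat_two_pow_mul hj, mul_left_comm, hrel, Pi.mul_apply, ← mul_assoc]

lemma atomHat_wavelet_mem_approxSpace (h : RefinablePair p q A E) (hD : IsCommonDenominator p D J)
    (hc : c * b = a) (hj : j < J) (m : ℤ) : atomHat q c j m ∈ approxSpace p D b J := by
  obtain ⟨i, hi⟩ : ∃ i, J - j = i + 1 := ⟨J - j - 1, by omega⟩
  obtain ⟨T, hT, hrel⟩ := hD.exists_mul_eq i (by omega)
  refine ⟨_, mul_mem (fourierKernel_dilated_mem_periodicAnalytic hc m (J - j))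
    (trigPoly_le_periodicAnalytic b
      (mul_mem (comp_two_pow_mul_mem_trigPoly h.mem_trigPoly_left i) hT)), fun v ↦ ?_⟩
  have hdouble : (2 : ℝ) ^ (J - j) * v = 2 * (2 ^ i * v) := by
    rw [hi]
    ring
  rw [atomHat_two_pow_mul hj.le, hdouble, h.wavelet_two_mul]
  simp only [Pi.mul_apply]
  linear_combination fourierKernel (c * m * 2 ^ (J - j) * v) * A (2 ^ i * v) * hrel v

lemma exists_periodicAnalytic_of_mem_span_atomHat {f : ℝ → ℂ} (hc : c * b = a)
    (hf : f ∈ Submodule.span ℂ (Set.range (atomHat q c J))) :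
    ∃ g ∈ periodicAnalytic b, ∀ v, f (2 ^ J * v) = g v * q v := by
  induction hf using Submodule.span_induction with
  | mem _ hmem =>
    obtain ⟨m, rfl⟩ := hmem
    exact ⟨_, fourierKernel_dilated_mem_periodicAnalytic hc m 0, fun v ↦ by
      simp [atomHat_two_pow_mul le_rfl]⟩
  | zero => exact ⟨0, zero_mem _, fun v ↦ by simp⟩
  | add f₁ f₂ _ _ ih₁ ih₂ =>
    obtain ⟨g₁, hg₁, hf₁⟩ := ih₁
    obtain ⟨g₂, hg₂, hf₂⟩ := ih₂
    exact ⟨g₁ + g₂, add_mem hg₁ hg₂, fun v ↦ by simp only [Pi.add_apply, hf₁, hf₂, add_mul]⟩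
  | smul r f _ ih =>
    obtain ⟨g, hg, hf⟩ := ih
    exact ⟨r • g, Subalgebra.smul_mem _ hg r, fun v ↦ by
      simp only [Pi.smul_apply, smul_eq_mul, hf, mul_assoc]⟩

lemma eq_zero_of_mem_span_atomHat_of_mem_approxSpace (h : RefinablePair p q A E)
    (hdet : ∃ w, A w * E (w + 1 / 2) ≠ A (w + 1 / 2) * E w) (hD : IsCommonDenominator p D J)
    (hb : Odd b) (hc : c * b = a) {f : ℝ → ℂ}
    (hspan : f ∈ Submodule.span ℂ (Set.range (atomHat q c J)))
    (hf : f ∈ approxSpace p D b J) : f = 0 := by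
  obtain ⟨P, hP, hfP⟩ := exists_periodicAnalytic_of_mem_span_atomHat hc hspan
  obtain ⟨Q, hQ, hfQ⟩ := hf
  have hDP : D * P ∈ periodicAnalytic b :=
    mul_mem (trigPoly_le_periodicAnalytic b hD.mem_trigPoly) hP
  have hDP0 : D * P = 0 := h.eq_zero_of_periodic_combination (Q := -Q) hdet hb
    (continuous_of_mem_periodicAnalytic hDP) (continuous_of_mem_periodicAnalytic (neg_mem hQ))
    hDP.2 (neg_mem hQ).2 fun v ↦ by
      simp only [Pi.mul_apply, Pi.neg_apply]
      linear_combination hfQ v - D v * hfP v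
  have hP0 : P = 0 := eq_zero_of_analytic_mul_eq_zero
    (analyticOnNhd_of_mem_trigPoly hD.mem_trigPoly) hD.ne_zero
    (continuous_of_mem_periodicAnalytic hP) (congrFun hDP0)
  ext ξ
  have hξ := hfP (ξ / 2 ^ J)
  rwa [mul_div_cancel₀ ξ (by positivity), hP0, Pi.zero_apply, zero_mul] at hξ

end ApproxSpace

/-! ### Wavelets orthogonal to their dilates -/

section OrthogonalWavelet

variable {ψ : ℝ → ℂ}

lemma hasCompactSupport_sum_mul {α ι : Type*} [TopologicalSpace α] (F : Finset ι) (a : ι → ℂ)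
    {f : ι → α → ℂ} (hf : ∀ i, HasCompactSupport (f i)) :
    HasCompactSupport fun x ↦ ∑ i ∈ F, a i * f i x := by
  classical
  induction F using Finset.induction_on with
  | empty =>
    simp only [Finset.sum_empty]
    exact HasCompactSupport.zero
  | insert i F hi ih =>
    simp only [Finset.sum_insert hi]
    exact (hf i).mul_left.add ih

lemma integrable_comp_mul_sub {f : ℝ → ℂ} (hcont : Continuous f) (hsupp : HasCompactSupport f)
    {a : ℝ} (ha : a ≠ 0) (b : ℝ) : Integrable fun x ↦ f (a * x - b) :=
  Continuous.integrable_of_hasCompactSupport (by fun_prop)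
    (hasCompactSupport_comp_mul_sub hsupp ha b)

lemma eq_zero_of_integral_conj_mul_self_eq_zero {f : ℝ → ℂ} (hcont : Continuous f)
    (hsupp : HasCompactSupport f) (h : ∫ x, (starRingEnd ℂ) (f x) * f x = 0) : f = 0 := by
  have hmem := hcont.memLp_of_hasCompactSupport (p := 2) (μ := volume) hsupp
  rw [← inner_toLp hmem hmem, inner_self_eq_zero] at h
  exact (hcont.ae_eq_iff_eq volume continuous_zero).mp
    ((MemLp.toLp_eq_toLp_iff hmem MemLp.zero).mp (h.trans (MemLp.toLp_zero _).symm))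

lemma fourier_sum_mul_comp_mul_sub {f : ℝ → ℂ} (hcont : Continuous f) (hsupp : HasCompactSupport f)
    {a : ℝ} (ha : 0 < a) (F : Finset ℤ) (c : ℤ → ℂ) (ξ : ℝ) :
    𝓕 (fun x ↦ ∑ k ∈ F, c k * f (a * x - k)) ξ =
      a⁻¹ * (∑ k ∈ F, c k * fourierKernel (k * (ξ / a))) * 𝓕 f (ξ / a) := by
  rw [fourier_sum_mul F c fun k _ ↦ integrable_comp_mul_sub hcont hsupp ha.ne' k,
    Finset.mul_sum, Finset.sum_mul]
  exact Finset.sum_congr rfl fun k _ ↦ by rw [fourier_comp_mul_sub f ha]; ring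

lemma sum_translates_eq_zero_of_eq_sum_dilates (hcont : Continuous ψ) (hsupp : HasCompactSupport ψ)
    (horth : ∀ k l : ℤ, ∫ x : ℝ, (starRingEnd ℂ) (ψ (x - k)) * ψ (2 * x - l) = 0)
    {F G : Finset ℤ} {a b : ℤ → ℂ}
    (h : (fun x ↦ ∑ k ∈ F, a k * ψ (1 * x - k)) = fun x ↦ ∑ l ∈ G, b l * ψ (2 * x - l)) :
    (fun x ↦ ∑ k ∈ F, a k * ψ (1 * x - k)) = 0 := by
  refine eq_zero_of_integral_conj_mul_self_eq_zero (by fun_prop)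
    (hasCompactSupport_sum_mul F a fun k ↦ hasCompactSupport_comp_mul_sub hsupp one_ne_zero k) ?_
  have hexpand (x : ℝ) : (starRingEnd ℂ) (∑ k ∈ F, a k * ψ (1 * x - k)) *
      ∑ k ∈ F, a k * ψ (1 * x - k) = ∑ k ∈ F, ∑ l ∈ G, (starRingEnd ℂ) (a k) * b l *
        ((starRingEnd ℂ) (ψ (x - k)) * ψ (2 * x - l)) := by
    rw [congrFun h x, ← congrFun h x, map_sum, congrFun h x, Finset.sum_mul_sum]
    refine Finset.sum_congr rfl fun k _ ↦ Finset.sum_congr rfl fun l _ ↦ ?_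
    rw [one_mul, map_mul]
    ring
  have hint (k l : ℤ) : Integrable fun x : ℝ ↦ (starRingEnd ℂ) (a k) * b l *
      ((starRingEnd ℂ) (ψ (x - k)) * ψ (2 * x - l)) := by
    refine Continuous.integrable_of_hasCompactSupport ?_
      ((hasCompactSupport_comp_mul_sub hsupp two_ne_zero l).mul_left.mul_left)
    have := Complex.continuous_conj
    fun_prop
  simp only [hexpand]
  rw [integral_finsetSum _ fun k _ ↦ integrable_finsetSum _ fun l _ ↦ hint k l]
  refine Finset.sum_eq_zero fun k _ ↦ ?_
  rw [integral_finsetSum _ fun l _ ↦ hint k l]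
  exact Finset.sum_eq_zero fun l _ ↦ by rw [integral_const_mul, horth, mul_zero]

lemma trigPoly_mul_fourier_eq_zero_of_orthogonal (hcont : Continuous ψ)
    (hsupp : HasCompactSupport ψ)
    (horth : ∀ k l : ℤ, ∫ x : ℝ, (starRingEnd ℂ) (ψ (x - k)) * ψ (2 * x - l) = 0)
    {a b : ℝ → ℂ} (ha : a ∈ trigPoly) (hb : b ∈ trigPoly)
    (hrel : ∀ ξ, a ξ * 𝓕 ψ ξ = b (ξ / 2) * 𝓕 ψ (ξ / 2)) (ξ : ℝ) : a ξ * 𝓕 ψ ξ = 0 := by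
  obtain ⟨F, α, rfl⟩ := exists_eq_sum_of_mem_trigPoly ha
  obtain ⟨G, β, rfl⟩ := exists_eq_sum_of_mem_trigPoly hb
  set f : ℝ → ℂ := fun x ↦ ∑ k ∈ F, α k * ψ (1 * x - k)
  set g : ℝ → ℂ := fun x ↦ ∑ l ∈ G, 2 * β l * ψ (2 * x - l)
  have hf_fourier (ξ : ℝ) : 𝓕 f ξ = (∑ k ∈ F, α k * fourierKernel (k * ξ)) * 𝓕 ψ ξ := by
    rw [fourier_sum_mul_comp_mul_sub hcont hsupp one_pos F]
    simp
  have hg_fourier (ξ : ℝ) :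
      𝓕 g ξ = (∑ l ∈ G, β l * fourierKernel (l * (ξ / 2))) * 𝓕 ψ (ξ / 2) := by
    rw [fourier_sum_mul_comp_mul_sub hcont hsupp two_pos G]
    simp [mul_assoc, ← Finset.mul_sum]
  have hf_int : Integrable f := integrable_finsetSum _ fun k _ ↦
    (integrable_comp_mul_sub hcont hsupp one_ne_zero k).const_mul _
  have hg_int : Integrable g := integrable_finsetSum _ fun k _ ↦
    (integrable_comp_mul_sub hcont hsupp two_ne_zero k).const_mul _
  have hfg : f = g := by
    refine sub_eq_zero.mp (eq_zero_of_fourier_eq_zero (by fun_prop) (hf_int.sub hg_int) ?_)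
    ext ξ
    rw [fourier_sub hf_int hg_int, hf_fourier, hg_fourier, hrel, sub_self, Pi.zero_apply]
  have hf0 : f = 0 := sum_translates_eq_zero_of_eq_sum_dilates hcont hsupp horth hfg
  rw [← hf_fourier, hf0]
  simp [fourier_eq_integral_fourierKernel]

end OrthogonalWavelet

namespace RefinablePair

variable {p q A E : ℝ → ℂ} (h : RefinablePair p q A E)

include h

lemma exists_trigPoly_mul_wavelet_eq_mul_scaling
    (hdet : ∀ w, A w * E (w + 1 / 2) = A (w + 1 / 2) * E w) :
    ∃ e ∈ trigPoly, ∃ u ∈ trigPoly, u ≠ 0 ∧ ∀ x, e x * q x = u x * p x := by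
  have hE' := comp_add_right_mem_trigPoly h.mem_trigPoly_right (1 / 2)
  have hE'0 : (fun w ↦ E (w + 1 / 2)) ≠ 0 := by
    simpa using comp_affine_ne_zero h.right_ne_zero one_ne_zero (1 / 2)
  have hE_add (w : ℝ) : E (w + 1 / 2 + 1 / 2) = E w := by
    rw [add_assoc, add_halves, trigPoly_add_one h.mem_trigPoly_right]
  have he := comp_div_two_mem_trigPoly (mul_mem h.mem_trigPoly_right hE') fun w ↦ by
    simp only [Pi.mul_apply, hE_add, mul_comm]
  have hu := comp_div_two_mem_trigPoly (mul_mem (mul_mem h.mem_trigPoly_left hE')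
      (comp_natCast_mul_mem_trigPoly h.mem_trigPoly_left 2)) fun w ↦ by
    have htwo : ((2 : ℕ) : ℝ) * (w + 1 / 2) = (2 : ℕ) * w + 1 := by push_cast; ring
    simp only [Pi.mul_apply, hE_add, htwo, trigPoly_add_one h.mem_trigPoly_left, hdet w]
  have hrel (x : ℝ) : (E * fun w ↦ E (w + 1 / 2)) (x / 2) * q x =
      ((A * fun w ↦ E (w + 1 / 2)) * fun w ↦ A ((2 : ℕ) * w)) (x / 2) * p x := by
    have hq := h.wavelet_two_mul (x / 2)
    have hp := h.mul_scaling_two_mul (x / 2)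
    rw [mul_div_cancel₀ x two_ne_zero] at hq hp
    simp only [Pi.mul_apply, Nat.cast_ofNat, mul_div_cancel₀ x (two_ne_zero' ℝ), hq]
    linear_combination -A (x / 2) * E (x / 2 + 1 / 2) * hp
  refine ⟨_, he, _, hu, fun hu0 ↦ ?_, hrel⟩
  have he0 : (fun x ↦ (E * fun w ↦ E (w + 1 / 2)) (x / 2)) ≠ 0 := by
    simpa only [div_eq_inv_mul] using comp_mul_left_ne_zero
      (trigPoly_mul_ne_zero h.mem_trigPoly_right h.right_ne_zero hE' hE'0)
      (inv_ne_zero (two_ne_zero' ℝ))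
  exact h.wavelet_ne_zero <| eq_zero_of_analytic_mul_eq_zero (analyticOnNhd_of_mem_trigPoly he) he0
    h.continuous_wavelet fun x ↦ by rw [hrel, congrFun hu0 x, Pi.zero_apply, zero_mul]

lemma exists_trigPoly_mul_wavelet_eq_mul_wavelet_half {e u : ℝ → ℂ} (he : e ∈ trigPoly)
    (hu : u ∈ trigPoly) (hu0 : u ≠ 0) (hrel : ∀ x, e x * q x = u x * p x) :
    ∃ a ∈ trigPoly, ∃ b ∈ trigPoly, a ≠ 0 ∧ ∀ x, a x * q x = b (x / 2) * q (x / 2) := by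
  have hu' := comp_add_right_mem_trigPoly hu (1 / 2)
  have hu'0 : (fun w ↦ u (w + 1 / 2)) ≠ 0 := by
    simpa using comp_affine_ne_zero hu0 one_ne_zero (1 / 2)
  have ha := comp_div_two_mem_trigPoly (mul_mem hu hu') fun w ↦ by
    simp only [Pi.mul_apply, add_assoc, add_halves, trigPoly_add_one hu, mul_comm]
  refine ⟨_, ha, _, mul_mem (mul_mem he h.mem_trigPoly_left) hu', ?_, fun x ↦ ?_⟩
  · simpa only [div_eq_inv_mul] using comp_mul_left_ne_zero
      (trigPoly_mul_ne_zero hu hu0 hu' hu'0) (inv_ne_zero (two_ne_zero' ℝ))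
  · have hq := h.wavelet_two_mul (x / 2)
    rw [mul_div_cancel₀ x two_ne_zero] at hq
    simp only [Pi.mul_apply, hq]
    linear_combination -A (x / 2) * u (x / 2 + 1 / 2) * hrel (x / 2)

end RefinablePair

/- If the determinant vanished, `ψ` would satisfy a relation between its integer translates and
those of `ψ(2 ·)`, which orthogonality excludes. -/
lemma exists_det_ne_of_orthogonal {ψ p A E : ℝ → ℂ} (hcont : Continuous ψ)
    (hsupp : HasCompactSupport ψ)
    (horth : ∀ k l : ℤ, ∫ x : ℝ, (starRingEnd ℂ) (ψ (x - k)) * ψ (2 * x - l) = 0)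
    (h : RefinablePair p (𝓕 ψ) A E) : ∃ w, A w * E (w + 1 / 2) ≠ A (w + 1 / 2) * E w := by
  by_contra! hdet
  obtain ⟨e, he, u, hu, hu0, heu⟩ := h.exists_trigPoly_mul_wavelet_eq_mul_scaling hdet
  obtain ⟨a, ha, b, hb, ha0, hab⟩ :=
    h.exists_trigPoly_mul_wavelet_eq_mul_wavelet_half he hu hu0 heu
  exact h.wavelet_ne_zero <| eq_zero_of_analytic_mul_eq_zero (analyticOnNhd_of_mem_trigPoly ha) ha0
    h.continuous_wavelet (trigPoly_mul_fourier_eq_zero_of_orthogonal hcont hsupp horth ha hb hab)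

/-! ### The refinable pair of a multiresolution analysis -/

section OfMRA

variable {φ ψ : ℝ → ℂ}

lemma exists_trigPoly_fourier_mul_eq {f : ℝ → ℂ} (hφc : Continuous φ)
    (hφs : HasCompactSupport φ)
    (hφorth : Pairwise fun m n : ℤ ↦ ∫ x : ℝ, (starRingEnd ℂ) (φ (x - m)) * φ (x - n) = 0)
    (hfc : Continuous f) (hfs : HasCompactSupport f) {a : ℝ} (ha : 0 < a)
    (happrox : ∀ ε : ℝ, 0 < ε → ∃ (F : Finset ℤ) (c : ℤ → ℂ),
      eLpNorm (fun x : ℝ ↦ f x - ∑ k ∈ F, c k * φ (a * x - k)) 2 volume < ENNReal.ofReal ε) :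
    ∃ A ∈ trigPoly, ∀ v, 𝓕 f (a * v) = A v * 𝓕 φ v := by
  obtain ⟨F, c, rfl⟩ := exists_eq_sum_translates_of_approx hφc hφs hφorth hfc hfs ha.ne' happrox
  refine ⟨_, Subalgebra.smul_mem _ (sum_mul_fourierKernel_mem_trigPoly F c id) ((a⁻¹ : ℝ) : ℂ),
    fun v ↦ ?_⟩
  rw [fourier_sum_mul_comp_mul_sub hφc hφs ha, mul_div_cancel_left₀ v ha.ne']
  simp

lemma fourier_ne_zero {f : ℝ → ℂ} (hcont : Continuous f) (hsupp : HasCompactSupport f)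
    (hf : f ≠ 0) : 𝓕 f ≠ 0 := fun h ↦
  hf (eq_zero_of_fourier_eq_zero hcont (hcont.integrable_of_hasCompactSupport hsupp) h)

lemma exists_refinablePair_fourier (hφc : Continuous φ) (hφs : HasCompactSupport φ)
    (hφ0 : φ ≠ 0)
    (hφorth : Pairwise fun m n : ℤ ↦ ∫ x : ℝ, (starRingEnd ℂ) (φ (x - m)) * φ (x - n) = 0)
    (hψc : Continuous ψ) (hψs : HasCompactSupport ψ) (hψ0 : ψ ≠ 0)
    (hψspan : ∀ a ∈ ({2, 4} : Set ℝ), ∀ ε : ℝ, 0 < ε → ∃ (F : Finset ℤ) (c : ℤ → ℂ),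
      eLpNorm (fun x : ℝ ↦ ψ x - ∑ k ∈ F, c k * φ (a * x - k)) 2 volume < ENNReal.ofReal ε) :
    ∃ A E, RefinablePair (𝓕 φ) (𝓕 ψ) A E := by
  obtain ⟨A, hA, hψA⟩ :=
    exists_trigPoly_fourier_mul_eq hφc hφs hφorth hψc hψs two_pos (hψspan 2 (by simp))
  obtain ⟨E, hE, hψE⟩ :=
    exists_trigPoly_fourier_mul_eq hφc hφs hφorth hψc hψs four_pos (hψspan 4 (by simp))
  have hφint := hφc.integrable_of_hasCompactSupport hφs (μ := volume)
  exact ⟨A, E, analyticOnNhd_fourier hφint hφs,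
    analyticOnNhd_fourier (hψc.integrable_of_hasCompactSupport hψs) hψs,
    fourier_ne_zero hφc hφs hφ0, fourier_ne_zero hψc hψs hψ0,
    Real.zero_at_infty_fourier φ, hA, hE, hψA, hψE⟩

end OfMRA

/-! ### Isolating a slope -/

/-- A pair of factors of a sheared product: `g` is analytic of period `b`, and `V` is continuous
and vanishes at infinity. -/
structure IsDecayingPair (b : ℝ) (g V : ℝ → ℂ) : Prop where
  mem_periodicAnalytic : g ∈ periodicAnalytic b
  continuous_right : Continuous V
  tendsto_right : Tendsto V (cocompact ℝ) (𝓝 0)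

section ShearedSum

variable {ι : Type*} (F : Finset ι) (g V : ι → ℝ → ℂ) (σ : ι → ℝ)

/-- The finite sum of products `g r(v) V r(w - σ r v)`, each sheared by its slope `σ r`. -/
noncomputable def shearedSum (v w : ℝ) : ℂ := ∑ r ∈ F, g r v * V r (w - σ r * v)

open Classical in
/-- The part of slope `s` of `shearedSum`, in the coordinates `v` and `t = w - s v`. -/
noncomputable def slopePart (s v t : ℝ) : ℂ := ∑ r ∈ F with σ r = s, g r v * V r t

variable {F g V σ} {b : ℝ}

lemma continuous_shearedSum (hgV : ∀ r ∈ F, IsDecayingPair b (g r) (V r)) :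
    Continuous fun x : ℝ × ℝ ↦ shearedSum F g V σ x.1 x.2 := by
  refine continuous_finsetSum _ fun r hr ↦ ?_
  have hg := continuous_of_mem_periodicAnalytic (hgV r hr).mem_periodicAnalytic
  have hV := (hgV r hr).continuous_right
  fun_prop

lemma continuous_slopePart (hgV : ∀ r ∈ F, IsDecayingPair b (g r) (V r)) (s : ℝ) :
    Continuous fun x : ℝ × ℝ ↦ slopePart F g V σ s x.1 x.2 := by
  refine continuous_finsetSum _ fun r hr ↦ ?_
  have hgVr := hgV r (Finset.mem_filter.mp hr).1
  have hg := continuous_of_mem_periodicAnalytic hgVr.mem_periodicAnalytic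
  have hV := hgVr.continuous_right
  fun_prop

lemma slopePart_mem_periodicAnalytic (hgV : ∀ r ∈ F, IsDecayingPair b (g r) (V r)) (s t : ℝ) :
    (fun v ↦ slopePart F g V σ s v t) ∈ periodicAnalytic b := by
  have hsum : (fun v ↦ slopePart F g V σ s v t) =
      ∑ r ∈ F with σ r = s, V r t • g r := by
    ext v
    simp [slopePart, mul_comm]
  rw [hsum]
  exact sum_mem fun r hr ↦ Subalgebra.smul_mem _
    (hgV r (Finset.mem_filter.mp hr).1).mem_periodicAnalytic _

lemma tendsto_periodicAnalytic_mul_zero (hb : b ≠ 0) {f : ℝ → ℂ} (hf : f ∈ periodicAnalytic b)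
    (x : ℕ → ℝ) {z : ℕ → ℂ} (hz : Tendsto z atTop (𝓝 0)) :
    Tendsto (fun n ↦ f (x n) * z n) atTop (𝓝 0) := by
  obtain ⟨C, hC⟩ := exists_norm_le_of_mem_periodicAnalytic hb hf
  exact isBoundedUnder_le_mul_tendsto_zero
    (isBoundedUnder_of ⟨C, fun n ↦ hC (x n)⟩) hz

lemma tendsto_two_pow_mul_add_cocompact {a : ℝ} (ha : a ≠ 0) (u : ℝ) :
    Tendsto (fun n : ℕ ↦ 2 ^ n * a + u) atTop (cocompact ℝ) := by
  have hpow : Tendsto (fun n : ℕ ↦ (2 : ℝ) ^ n) atTop atTop :=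
    tendsto_pow_atTop_atTop_of_one_lt one_lt_two
  rcases lt_or_gt_of_ne ha with hneg | hpos
  · exact (tendsto_atBot_add_const_right _ _ (hpow.atTop_mul_const_of_neg hneg)).mono_right
      atBot_le_cocompact
  · exact (tendsto_atTop_add_const_right _ _ (hpow.atTop_mul_const hpos)).mono_right
      atTop_le_cocompact

/- Along the ray of slope `s` only the terms of slope `s` keep a bounded sheared argument. -/
lemma tendsto_shearedSum_sub_slopePart (hb : b ≠ 0)
    (hgV : ∀ r ∈ F, IsDecayingPair b (g r) (V r)) {a s : ℝ} (ha : a ≠ 0) (u u' : ℝ) :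
    Tendsto (fun n : ℕ ↦ shearedSum F g V σ (2 ^ n * a + u) (2 ^ n * (s * a) + u') -
      slopePart F g V σ s (2 ^ n * a + u) (u' - s * u)) atTop (𝓝 0) := by
  classical
  have hrest : Tendsto (fun n : ℕ ↦ ∑ r ∈ F with σ r ≠ s, g r (2 ^ n * a + u) *
      V r (2 ^ n * ((s - σ r) * a) + (u' - σ r * u))) atTop (𝓝 0) := by
    rw [show 𝓝 (0 : ℂ) = 𝓝 (∑ r ∈ F with σ r ≠ s, 0) by rw [Finset.sum_const_zero]]
    refine tendsto_finsetSum _ fun r hr ↦ ?_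
    obtain ⟨hrF, hrs⟩ := Finset.mem_filter.mp hr
    exact tendsto_periodicAnalytic_mul_zero hb (hgV r hrF).mem_periodicAnalytic _
      ((hgV r hrF).tendsto_right.comp
        (tendsto_two_pow_mul_add_cocompact (mul_ne_zero (sub_ne_zero.mpr hrs.symm) ha) _))
  refine hrest.congr fun n ↦ ?_
  rw [eq_sub_iff_add_eq, shearedSum, add_comm,
    ← Finset.sum_filter_add_sum_filter_not F fun r ↦ σ r = s]
  congr 1
  · refine Finset.sum_congr (by congr) fun r hr ↦ ?_
    rw [(Finset.mem_filter.mp hr).2]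
    ring_nf
  · exact Finset.sum_congr rfl fun r _ ↦ by ring_nf

end ShearedSum

section Isolation

variable {p q A E : ℝ → ℂ}

lemma RefinablePair.exists_orbit_relation (h : RefinablePair p q A E) {D : ℝ → ℂ}
    (hD : D ∈ trigPoly) (hD0 : D ≠ 0) {X Y : ℝ → ℝ → ℂ}
    (hX : Continuous fun x : ℝ × ℝ ↦ X x.1 x.2) (hY : Continuous fun x : ℝ × ℝ ↦ Y x.1 x.2)
    (hrel : ∀ v w, p v * D w * X v w + p w * D v * Y w v = 0) (f : ℕ) :
    ∃ B ∈ trigPoly, B ≠ 0 ∧ ∃ C ∈ trigPoly, ∀ (n : ℕ) (m : ℤ) (x : ℝ),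
      B (2 ^ n * x) * (p x * X (2 ^ f * (2 ^ n * x)) (2 ^ n * (x + m))) +
        C (2 ^ n * x) * (p (x + m) * Y (2 ^ n * (x + m)) (2 ^ f * (2 ^ n * x))) = 0 := by
  obtain ⟨Df, hDf, hDf0, hTf⟩ := h.exists_isCommonDenominator f
  obtain ⟨T, hT, hpT⟩ := hTf f le_rfl
  have hp := h.continuous_scaling
  have hT0 : T ≠ 0 := by
    rintro rfl
    refine comp_mul_left_ne_zero h.scaling_ne_zero (pow_ne_zero f two_ne_zero)
      (eq_zero_of_analytic_mul_eq_zero (analyticOnNhd_of_mem_trigPoly hDf) hDf0 (by fun_prop)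
        fun v ↦ ?_)
    simpa using hpT v
  have hDdil := comp_two_pow_mul_mem_trigPoly hD f
  refine ⟨T * D, mul_mem hT hD, trigPoly_mul_ne_zero hT hT0 hD hD0, _, mul_mem hDf hDdil,
    fun n m ↦ ?_⟩
  have hB := continuous_of_mem_trigPoly (mul_mem hT hD)
  have hC := continuous_of_mem_trigPoly (mul_mem hDf hDdil)
  refine congrFun (eq_zero_of_analytic_mul_eq_zero
    (analyticOnNhd_comp_mul_left h.analytic_scaling _)
    (comp_mul_left_ne_zero h.scaling_ne_zero (pow_ne_zero n two_ne_zero)) ?_ fun x ↦ ?_)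
  · have hXc : Continuous fun x : ℝ ↦ X (2 ^ f * (2 ^ n * x)) (2 ^ n * (x + m)) :=
      hX.comp (f := fun x : ℝ ↦ (2 ^ f * (2 ^ n * x), 2 ^ n * (x + m))) (by fun_prop)
    have hYc : Continuous fun x : ℝ ↦ Y (2 ^ n * (x + m)) (2 ^ f * (2 ^ n * x)) :=
      hY.comp (f := fun x : ℝ ↦ (2 ^ n * (x + m), 2 ^ f * (2 ^ n * x))) (by fun_prop)
    exact ((hB.comp (continuous_const_mul _)).mul (hp.mul hXc)).add
      ((hC.comp (continuous_const_mul _)).mul ((hp.comp (continuous_add_const _)).mul hYc))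
  · have hDshift : D (2 ^ n * (x + m)) = D (2 ^ n * x) := by
      rw [← trigPoly_add_intCast hD (2 ^ n * x) (2 ^ n * m)]
      congr 1
      push_cast
      ring
    have hrel_orbit := hrel (2 ^ f * (2 ^ n * x)) (2 ^ n * (x + m))
    rw [hDshift] at hrel_orbit
    simp only [Pi.mul_apply]
    linear_combination p x * Df (2 ^ n * x) * hrel_orbit
      - p x * D (2 ^ n * x) * X (2 ^ f * (2 ^ n * x)) (2 ^ n * (x + m)) * hpT (2 ^ n * x)
      - Df (2 ^ n * x) * D (2 ^ f * (2 ^ n * x)) * Y (2 ^ n * (x + m)) (2 ^ f * (2 ^ n * x)) *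
        h.scaling_two_pow_mul_add_intCast n m x

lemma slopePart_eq_zero_of_forall_ne {ι : Type*} {F : Finset ι} {g V : ι → ℝ → ℂ} {σ : ι → ℝ}
    {s : ℝ} (hs : ∀ r ∈ F, σ r ≠ s) (v t : ℝ) : slopePart F g V σ s v t = 0 := by
  classical
  rw [slopePart, Finset.filter_false_of_mem hs, Finset.sum_empty]

lemma tendsto_add_div_two_pow (y u : ℝ) :
    Tendsto (fun n : ℕ ↦ y + u / 2 ^ n) atTop (𝓝 y) := by
  simpa using (tendsto_const_nhds (x := y)).add
    ((tendsto_const_nhds (x := u)).div_atTop (tendsto_pow_atTop_atTop_of_one_lt one_lt_two))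

variable {ι κ : Type*} {F : Finset ι} {K : Finset κ} {g V : ι → ℝ → ℂ} {g' V' : κ → ℝ → ℂ}
  {σ : ι → ℝ} {σ' : κ → ℝ} {s : ℝ}

lemma tendsto_trigPoly_mul_slopePart (hp : Continuous p) {b : ℕ} (hb : 0 < b)
    (hgV : ∀ r ∈ F, IsDecayingPair b (g r) (V r))
    (hgV' : ∀ r ∈ K, IsDecayingPair b (g' r) (V' r))
    (hs : s ≠ 0) (hsK : ∀ r ∈ K, s * σ' r ≠ 1) {f : ℕ} {B C : ℝ → ℂ} (hB : B ∈ trigPoly)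
    (hC : C ∈ trigPoly) {m : ℤ} {y : ℝ} (hy : y ≠ 0) (hpy : p y ≠ 0)
    (hym : y * (2 ^ f * s - 1) = m)
    (horbit : ∀ (n : ℕ) (x : ℝ),
      B (2 ^ n * x) * (p x * shearedSum F g V σ (2 ^ f * (2 ^ n * x)) (2 ^ n * (x + m))) +
        C (2 ^ n * x) *
          (p (x + m) * shearedSum K g' V' σ' (2 ^ n * (x + m)) (2 ^ f * (2 ^ n * x))) = 0)
    (u : ℝ) :
    Tendsto (fun n : ℕ ↦ B (2 ^ n * y + u) *
      slopePart F g V σ s (2 ^ f * (2 ^ n * y + u)) ((1 - 2 ^ f * s) * u)) atTop (𝓝 0) := by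
  have hb0 : (b : ℝ) ≠ 0 := by positivity
  have hf0 : (2 : ℝ) ^ f ≠ 0 := by positivity
  set x : ℕ → ℝ := fun n ↦ y + u / 2 ^ n
  have hx (n : ℕ) : 2 ^ n * x n = 2 ^ n * y + u := by simp only [x]; field_simp
  have hx' (n : ℕ) : 2 ^ n * (x n + m) = 2 ^ n * (s * (2 ^ f * y)) + u := by
    rw [mul_add, hx, ← hym]
    ring
  have hpx : Tendsto (fun n ↦ p (x n)) atTop (𝓝 (p y)) :=
    (hp.tendsto y).comp (tendsto_add_div_two_pow y u)
  have hpxm : Tendsto (fun n ↦ p (x n + m)) atTop (𝓝 (p (y + m))) :=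
    (hp.tendsto _).comp ((tendsto_add_div_two_pow y u).add_const _)
  have hX := tendsto_shearedSum_sub_slopePart (σ := σ) (s := s) hb0 hgV (mul_ne_zero hf0 hy)
    (2 ^ f * u) u
  have hY := tendsto_shearedSum_sub_slopePart (σ := σ') (s := s⁻¹) hb0 hgV'
    (mul_ne_zero hs (mul_ne_zero hf0 hy)) u (2 ^ f * u)
  have hKs : ∀ r ∈ K, σ' r ≠ s⁻¹ := fun r hr hrs ↦ hsK r hr (by rw [hrs, mul_inv_cancel₀ hs])
  simp only [slopePart_eq_zero_of_forall_ne hKs, sub_zero, inv_mul_cancel_left₀ hs] at hY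
  have hprod := ((tendsto_periodicAnalytic_mul_zero hb0 (trigPoly_le_periodicAnalytic b hB)
    (fun n ↦ 2 ^ n * x n) (by simpa using hpx.mul hX)).add
    (tendsto_periodicAnalytic_mul_zero hb0 (trigPoly_le_periodicAnalytic b hC)
    (fun n ↦ 2 ^ n * x n) (by simpa using hpxm.mul hY))).neg.mul (hpx.inv₀ hpy)
  rw [add_zero, neg_zero, zero_mul] at hprod
  refine hprod.congr' ?_
  filter_upwards [hpx.eventually_ne hpy] with n hpn
  have horbit_n := horbit n (x n)
  have hfdist : 2 ^ f * (2 ^ n * y + u) = 2 ^ n * (2 ^ f * y) + 2 ^ f * u := by ring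
  rw [hx', hx, hfdist] at horbit_n
  rw [hx, hfdist, show (1 - 2 ^ f * s) * u = u - s * (2 ^ f * u) by ring, ← div_eq_mul_inv,
    div_eq_iff hpn]
  linear_combination -horbit_n

lemma eventually_exists_mul_eq_intCast {U : Set ℝ} (hU : IsOpen U) (hne : U.Nonempty) :
    ∀ᶠ L in cocompact ℝ, ∃ y ∈ U, ∃ m : ℤ, y * L = m := by
  obtain ⟨x, hx⟩ := hne
  obtain ⟨ε, hε, hball⟩ := Metric.isOpen_iff.mp hU x hx
  filter_upwards [tendsto_norm_cocompact_atTop.eventually_gt_atTop ε⁻¹] with L hL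
  rw [Real.norm_eq_abs] at hL
  have hL0 : L ≠ 0 := abs_pos.mp ((inv_pos.mpr hε).trans hL)
  refine ⟨round (x * L) / L, hball ?_, round (x * L), div_mul_cancel₀ _ hL0⟩
  calc dist (round (x * L) / L) x = |x * L - round (x * L)| / |L| := by
        rw [dist_comm, Real.dist_eq, ← abs_div, sub_div, mul_div_cancel_right₀ x hL0]
    _ ≤ (1 / 2) / |L| := by gcongr; exact abs_sub_round _
    _ < ε := by
        rw [div_lt_iff₀ (abs_pos.mpr hL0)]
        linarith [(inv_lt_iff_one_lt_mul₀' hε).mp hL]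

lemma eventually_exists_ne_zero_mul_eq_intCast (hp : AnalyticOnNhd ℝ p Set.univ) (hp0 : p ≠ 0)
    (hs : s ≠ 0) : ∀ᶠ f : ℕ in atTop, 2 ^ f * s ≠ 1 ∧
      ∃ (m : ℤ) (y : ℝ), y ≠ 0 ∧ p y ≠ 0 ∧ y * (2 ^ f * s - 1) = m := by
  have hcont := continuous_of_analyticOnNhd hp
  have hopen : IsOpen {y : ℝ | p y * y ≠ 0} := isOpen_ne_fun (by fun_prop) continuous_const
  have hne : {y : ℝ | p y * y ≠ 0}.Nonempty := by
    by_contra! hempty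
    have hid := eq_zero_of_analytic_mul_eq_zero hp hp0 Complex.continuous_ofReal fun y ↦
      not_not.mp (Set.eq_empty_iff_forall_notMem.mp hempty y)
    simpa using congrFun hid 1
  have htend : Tendsto (fun f : ℕ ↦ 2 ^ f * s - 1) atTop (cocompact ℝ) :=
    tendsto_two_pow_mul_add_cocompact hs (-1)
  filter_upwards [htend.eventually (eventually_exists_mul_eq_intCast hopen hne),
    htend.eventually isCompact_singleton.compl_mem_cocompact] with f ⟨y, hy, m, hm⟩ hf
  exact ⟨sub_ne_zero.mp hf, m, y, by simpa using right_ne_zero_of_mul hy,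
    left_ne_zero_of_mul hy, hm⟩

lemma exists_slopePart_eq_zero_on_line (h : RefinablePair p q A E) {D : ℝ → ℂ}
    (hD : D ∈ trigPoly) (hD0 : D ≠ 0) {b : ℕ} (hb : 0 < b)
    (hgV : ∀ r ∈ F, IsDecayingPair b (g r) (V r))
    (hgV' : ∀ r ∈ K, IsDecayingPair b (g' r) (V' r))
    (hrel : ∀ v w, p v * D w * shearedSum F g V σ v w + p w * D v * shearedSum K g' V' σ' w v = 0)
    (hs : s ≠ 0) (hsK : ∀ r ∈ K, s * σ' r ≠ 1) {f : ℕ} (hfs : 2 ^ f * s ≠ 1) {m : ℤ} {y : ℝ}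
    (hy : y ≠ 0) (hpy : p y ≠ 0) (hym : y * (2 ^ f * s - 1) = m) :
    ∃ z, ∀ t, slopePart F g V σ s (z + 2 ^ f / (1 - 2 ^ f * s) * t) t = 0 := by
  obtain ⟨B, hB, hB0, C, hC, horbit⟩ := h.exists_orbit_relation hD hD0
    (continuous_shearedSum hgV) (continuous_shearedSum hgV') hrel f
  have hR := continuous_slopePart (σ := σ) hgV s
  have hBc := continuous_of_mem_trigPoly hB
  have hper (u : ℝ) : Function.Periodic (fun w ↦
      B (w + u) * slopePart F g V σ s (2 ^ f * (w + u)) ((1 - 2 ^ f * s) * u)) b := fun w ↦ by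
    have hR_per := (slopePart_mem_periodicAnalytic (σ := σ) hgV s ((1 - 2 ^ f * s) * u)).2.nat_mul
      (2 ^ f) (2 ^ f * (w + u))
    have hB_per := trigPoly_add_intCast hB (w + u) b
    push_cast at hR_per hB_per
    simp only [add_right_comm w (b : ℝ) u, hB_per, mul_add (2 ^ f) (w + u), hR_per]
  obtain ⟨z, hz⟩ := exists_common_zero_of_periodic_of_tendsto (by positivity)
    (fun u ↦ (hBc.comp (continuous_add_const u)).mul
      (hR.comp (f := fun w ↦ (2 ^ f * (w + u), (1 - 2 ^ f * s) * u)) (by fun_prop)))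
    hper _ (tendsto_trigPoly_mul_slopePart h.continuous_scaling hb hgV hgV' hs hsK hB hC
      hy hpy hym fun n ↦ horbit n m)
  have hz_mul (u : ℝ) :
      B (u + z) * slopePart F g V σ s (2 ^ f * (u + z)) ((1 - 2 ^ f * s) * u) = 0 := by
    rw [add_comm u z]
    exact hz u
  have hzero (u : ℝ) : slopePart F g V σ s (2 ^ f * (u + z)) ((1 - 2 ^ f * s) * u) = 0 :=
    congrFun (eq_zero_of_analytic_mul_eq_zero
      (analyticOnNhd_of_mem_trigPoly (comp_add_right_mem_trigPoly hB z))
      (by simpa using comp_affine_ne_zero hB0 one_ne_zero z)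
      (hR.comp (f := fun u ↦ (2 ^ f * (u + z), (1 - 2 ^ f * s) * u)) (by fun_prop)) hz_mul) u
  refine ⟨2 ^ f * z, fun t ↦ ?_⟩
  have hfs' : 1 - 2 ^ f * s ≠ 0 := sub_ne_zero.mpr hfs.symm
  rw [← hzero (t / (1 - 2 ^ f * s)), mul_div_cancel₀ t hfs']
  congr 1
  ring

lemma countable_setOf_not_injective_coe_add_mul {ι : Type*} [Countable ι] {k : ι → ℝ}
    (hk : Function.Injective k) (z : ι → ℝ) (b : ℝ) :
    {t : ℝ | ¬ Function.Injective fun n ↦ ((z n + k n * t : ℝ) : AddCircle b)}.Countable := by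
  refine Set.Countable.mono ?_ (Set.countable_iUnion fun i : ι × ι × ℤ ↦
    Set.countable_singleton ((i.2.2 • b - (z i.1 - z i.2.1)) / (k i.1 - k i.2.1)))
  intro t ht
  obtain ⟨m, n, hmn, hne⟩ := Function.not_injective_iff.mp ht
  rw [← sub_eq_zero, ← AddCircle.coe_sub, AddCircle.coe_eq_zero_iff] at hmn
  obtain ⟨l, hl⟩ := hmn
  refine Set.mem_iUnion.mpr ⟨(m, n, l), ?_⟩
  rw [Set.mem_singleton_iff, eq_div_iff (sub_ne_zero.mpr (hk.ne hne)), hl]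
  ring

lemma injective_two_pow_div_one_sub {f₀ : ℕ} (hs : ∀ f ≥ f₀, (2 : ℝ) ^ f * s ≠ 1) :
    Function.Injective fun n : ℕ ↦ (2 : ℝ) ^ (f₀ + n) / (1 - 2 ^ (f₀ + n) * s) := by
  intro m n hmn
  have hne (n : ℕ) : 1 - (2 : ℝ) ^ (f₀ + n) * s ≠ 0 :=
    sub_ne_zero.mpr (hs _ (Nat.le_add_right f₀ n)).symm
  rw [div_eq_div_iff (hne m) (hne n)] at hmn
  have hpow : (2 : ℝ) ^ (f₀ + m) = 2 ^ (f₀ + n) := by linear_combination hmn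
  exact Nat.add_left_cancel (pow_right_injective₀ two_pos (by norm_num) hpow)

/- The slope part vanishes on infinitely many lines `v = z + k t`; for all but countably many `t`
this gives infinitely many zeros modulo the period. -/
theorem slopePart_eq_zero_of_relation (h : RefinablePair p q A E) {D : ℝ → ℂ}
    (hD : D ∈ trigPoly) (hD0 : D ≠ 0) {b : ℕ} (hb : 0 < b)
    (hgV : ∀ r ∈ F, IsDecayingPair b (g r) (V r))
    (hgV' : ∀ r ∈ K, IsDecayingPair b (g' r) (V' r))
    (hrel : ∀ v w, p v * D w * shearedSum F g V σ v w + p w * D v * shearedSum K g' V' σ' w v = 0)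
    (hs : s ≠ 0) (hsK : ∀ r ∈ K, s * σ' r ≠ 1) (v t : ℝ) : slopePart F g V σ s v t = 0 := by
  obtain ⟨f₀, hf₀⟩ := eventually_atTop.mp
    (eventually_exists_ne_zero_mul_eq_intCast h.analytic_scaling h.scaling_ne_zero hs)
  have hline (n : ℕ) : ∃ z, ∀ t,
      slopePart F g V σ s (z + 2 ^ (f₀ + n) / (1 - 2 ^ (f₀ + n) * s) * t) t = 0 := by
    obtain ⟨hfs, m, y, hy, hpy, hym⟩ := hf₀ (f₀ + n) (Nat.le_add_right f₀ n)
    exact exists_slopePart_eq_zero_on_line h hD hD0 hb hgV hgV' hrel hs hsK hfs hy hpy hym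
  choose z hz using hline
  have hdense := (countable_setOf_not_injective_coe_add_mul
    (injective_two_pow_div_one_sub fun f hf ↦ (hf₀ f hf).1) z b).dense_compl ℝ
  have hcont := (continuous_slopePart (σ := σ) hgV s).comp (Continuous.prodMk_right v)
  refine congrFun (hcont.ext_on hdense continuous_zero fun t ht ↦ ?_) t
  exact congrFun (eq_zero_of_mem_periodicAnalytic_of_injective_zeros (by positivity)
    (slopePart_mem_periodicAnalytic hgV s t) (hz · t) (not_not.mp ht)) v

end Isolation

lemma linearIndepOn_mul {ι κ X Y : Type*} {S : Set ι} {f : κ → X → ℂ} {g : ι → Y → ℂ} {e : ι → κ}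
    (hf : LinearIndependent ℂ f) (hg : ∀ k, LinearIndepOn ℂ g {i ∈ S | e i = k}) :
    LinearIndepOn ℂ (fun i (x : X × Y) ↦ f (e i) x.1 * g i x.2) S := by
  classical
  refine linearIndepOn_iff'.mpr fun F β hFS hsum i hi ↦ ?_
  have hfiber (y : Y) : ∑ r ∈ F with e r = e i, β r * g r y = 0 := by
    refine linearIndependent_iff'.mp hf (F.image e)
      (fun k ↦ ∑ r ∈ F with e r = k, β r * g r y) (funext fun x ↦ ?_) (e i)
      (Finset.mem_image_of_mem e hi)
    have hxy := congrFun hsum (x, y)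
    simp only [Finset.sum_apply, Pi.smul_apply, smul_eq_mul, Pi.zero_apply] at hxy ⊢
    rw [← hxy, ← Finset.sum_fiberwise_of_maps_to (g := e) fun r hr ↦ Finset.mem_image_of_mem e hr]
    refine Finset.sum_congr rfl fun k _ ↦ ?_
    rw [Finset.sum_mul]
    refine Finset.sum_congr rfl fun r hr ↦ ?_
    rw [(Finset.mem_filter.mp hr).2]
    ring
  refine linearIndepOn_iff'.mp (hg (e i)) {r ∈ F | e r = e i} β (fun r hr ↦ ?_)
    (funext fun y ↦ ?_) i (Finset.mem_filter.mpr ⟨hi, rfl⟩)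
  · obtain ⟨hrF, hr⟩ := Finset.mem_filter.mp hr
    exact ⟨hFS hrF, hr⟩
  · simpa using hfiber y

section AtomTerm

variable {p q A E D : ℝ → ℂ} {b N : ℕ}

/-- A pair of factors of a sheared product: `U` becomes a periodic multiple of `p` once `D` clears
the denominators, and `V` vanishes at infinity. -/
structure IsClearablePair (p D : ℝ → ℂ) (b N : ℕ) (U V : ℝ → ℂ) : Prop where
  continuous_left : Continuous U
  mem_approxSpace : U ∈ approxSpace p D b N
  continuous_right : Continuous V
  tendsto_right : Tendsto V (cocompact ℝ) (𝓝 0)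

lemma IsClearablePair.const_smul {U V : ℝ → ℂ} (hUV : IsClearablePair p D b N U V) (a : ℂ) :
    IsClearablePair p D b N (a • U) V :=
  ⟨hUV.continuous_left.const_smul a, Submodule.smul_mem _ a hUV.mem_approxSpace,
    hUV.continuous_right, hUV.tendsto_right⟩

variable {ι κ : Type*} {F : Finset ι} {K : Finset κ} {U V g : ι → ℝ → ℂ} {U' V' : κ → ℝ → ℂ}
  {σ : ι → ℝ} {σ' : κ → ℝ} {s : ℝ}

lemma slopePart_disjSum {g₁ : κ → ℝ → ℂ} {V₁ : κ → ℝ → ℂ} {σ₁ : κ → ℝ} (v t : ℝ) :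
    slopePart (F.disjSum K) (Sum.elim g g₁) (Sum.elim V V₁) (Sum.elim σ σ₁) s v t =
      slopePart F g V σ s v t + slopePart K g₁ V₁ σ₁ s v t := by
  simp only [slopePart, Finset.sum_filter, Finset.sum_disjSum]
  rfl

lemma slopePart_zero (hs : s ≠ 0) (v t : ℝ) : slopePart F g V 0 s v t = 0 := by
  simp [slopePart, hs.symm]

lemma shearedSum_of_forall_eq_zero (hσ : ∀ r ∈ F, σ r = 0) (v w : ℝ) :
    shearedSum F g V σ v w = ∑ r ∈ F, g r v * V r w :=
  Finset.sum_congr rfl fun r hr ↦ by rw [hσ r hr, zero_mul, sub_zero]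

lemma exists_isDecayingPair (hUV : ∀ r ∈ F, IsClearablePair p D b N (U r) (V r)) :
    ∃ g : ι → ℝ → ℂ, (∀ r ∈ F, IsDecayingPair b (g r) fun t ↦ V r (2 ^ N * t)) ∧
      ∀ r ∈ F, ∀ v, D v * U r (2 ^ N * v) = g r v * p v := by
  choose! g hg hgU using fun r hr ↦ (hUV r hr).mem_approxSpace
  have hdilate : Tendsto (fun t : ℝ ↦ 2 ^ N * t) (cocompact ℝ) (cocompact ℝ) :=
    (Homeomorph.mulLeft₀ ((2 : ℝ) ^ N) (by positivity)).isClosedEmbedding.tendsto_cocompact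
  exact ⟨g, fun r hr ↦ ⟨hg r hr, (hUV r hr).continuous_right.comp (continuous_const_mul _),
    (hUV r hr).tendsto_right.comp hdilate⟩, hgU⟩

lemma mul_shearedSum_two_pow_mul (hgU : ∀ r ∈ F, ∀ v, D v * U r (2 ^ N * v) = g r v * p v)
    (v w : ℝ) : D v * shearedSum F U V σ (2 ^ N * v) (2 ^ N * w) =
      p v * shearedSum F g (fun r t ↦ V r (2 ^ N * t)) σ v w := by
  simp only [shearedSum, Finset.mul_sum]
  refine Finset.sum_congr rfl fun r hr ↦ ?_
  have harg : 2 ^ N * w - σ r * (2 ^ N * v) = 2 ^ N * (w - σ r * v) := by ring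
  rw [harg, ← mul_assoc, hgU r hr]
  ring

lemma mul_slopePart_two_pow_mul (hgU : ∀ r ∈ F, ∀ v, D v * U r (2 ^ N * v) = g r v * p v)
    (v t : ℝ) : D v * slopePart F U V σ s (2 ^ N * v) (2 ^ N * t) =
      p v * slopePart F g (fun r t ↦ V r (2 ^ N * t)) σ s v t := by
  simp only [slopePart, Finset.mul_sum]
  refine Finset.sum_congr rfl fun r hr ↦ ?_
  rw [← mul_assoc, hgU r (Finset.mem_filter.mp hr).1]
  ring

lemma slopePart_eq_zero_of_isClearablePair (h : RefinablePair p q A E)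
    (hD : IsCommonDenominator p D N) (hb : 0 < b)
    (hUV : ∀ r ∈ F, IsClearablePair p D b N (U r) (V r))
    (hUV' : ∀ r ∈ K, IsClearablePair p D b N (U' r) (V' r))
    (hrel : ∀ ξ η, shearedSum F U V σ ξ η + shearedSum K U' V' σ' η ξ = 0)
    (hs : s ≠ 0) (hsK : ∀ r ∈ K, s * σ' r ≠ 1) (ξ t : ℝ) : slopePart F U V σ s ξ t = 0 := by
  obtain ⟨g, hgV, hgU⟩ := exists_isDecayingPair hUV
  obtain ⟨g', hgV', hgU'⟩ := exists_isDecayingPair hUV'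
  have hpart := slopePart_eq_zero_of_relation h hD.mem_trigPoly hD.ne_zero hb hgV hgV'
    (σ := σ) (σ' := σ') (fun v w ↦ by
      linear_combination D v * D w * hrel (2 ^ N * v) (2 ^ N * w)
        - D w * mul_shearedSum_two_pow_mul hgU v w
        - D v * mul_shearedSum_two_pow_mul hgU' w v) hs hsK
  have hdilate (x : ℝ) : 2 ^ N * (x / 2 ^ N) = x := mul_div_cancel₀ x (by positivity)
  have hcont : Continuous fun v ↦ slopePart F U V σ s (2 ^ N * v) t := by
    refine continuous_finsetSum _ fun r hr ↦ ?_
    have hU := (hUV r (Finset.mem_filter.mp hr).1).continuous_left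
    fun_prop
  have hzero := eq_zero_of_analytic_mul_eq_zero (analyticOnNhd_of_mem_trigPoly hD.mem_trigPoly)
    hD.ne_zero hcont fun v ↦ by
      have hmul := mul_slopePart_two_pow_mul (V := V) (σ := σ) (s := s) hgU v (t / 2 ^ N)
      rwa [hdilate, hpart, mul_zero] at hmul
  simpa only [hdilate, Pi.zero_apply] using congrFun hzero (ξ / 2 ^ N)

end AtomTerm

/-! ### The shearlet relation on the Fourier side -/

/-- The parameters of a shearlet, shared by both cones: the scale `j`, the shear `k`, and the
translation parameters of its wavelet factor and of its scaling factor. -/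
@[ext]
structure ShearletIndex where
  scale : ℕ
  shear : ℤ
  waveletShift : ℤ
  scalingShift : ℤ

namespace ShearletIndex

/-- The slope `2^⌊j/2⌋ k / 2^j` of the shear acting on the frequency plane. -/
noncomputable def slope (r : ShearletIndex) : ℝ := 2 ^ (r.scale / 2) * r.shear / 2 ^ r.scale

/-- The Fourier transform of the wavelet factor, up to normalization, when `q` is that of `ψ`. -/
noncomputable def waveletHat (q : ℝ → ℂ) (c : ℝ) (r : ShearletIndex) : ℝ → ℂ :=
  atomHat q c r.scale r.waveletShift

/-- The Fourier transform of the scaling factor, up to normalization, when `p` is that of `φ`. -/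
noncomputable def scalingHat (p : ℝ → ℂ) (c : ℝ) (r : ShearletIndex) : ℝ → ℂ :=
  atomHat p c (r.scale / 2) r.scalingShift

variable {r r' : ShearletIndex}

lemma slope_eq_zero : r.slope = 0 ↔ r.shear = 0 := by simp [slope]

lemma shear_eq_of_slope_eq (hscale : r.scale = r'.scale) (hslope : r.slope = r'.slope) :
    r.shear = r'.shear := by
  rw [slope, slope, hscale, div_left_inj' (by positivity)] at hslope
  exact_mod_cast mul_left_cancel₀ (by positivity) hslope

lemma abs_slope_le : |r.slope| ≤ |(r.shear : ℝ)| / 2 ^ (r.scale / 2) := by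
  have hpow : (2 : ℝ) ^ (r.scale / 2) * 2 ^ (r.scale / 2) ≤ 2 ^ r.scale := by
    rw [← pow_add]
    exact pow_le_pow_right₀ one_le_two (by omega)
  rw [slope, abs_div, abs_mul, abs_of_pos (by positivity : (0 : ℝ) < 2 ^ (r.scale / 2)),
    abs_of_pos (by positivity : (0 : ℝ) < 2 ^ r.scale), div_le_div_iff₀ (by positivity)
    (by positivity)]
  nlinarith [abs_nonneg (r.shear : ℝ)]

lemma slope_mul_slope_ne_one (hr : |r.shear| ≤ 2 ^ (r.scale / 2))
    (hr' : |r'.shear| < 2 ^ (r'.scale / 2)) : r.slope * r'.slope ≠ 1 := by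
  have hle : |r.slope| ≤ 1 := abs_slope_le.trans <|
    (div_le_one (by positivity)).mpr (by exact_mod_cast hr)
  have hlt : |r'.slope| < 1 := abs_slope_le.trans_lt <|
    (div_lt_one (by positivity)).mpr (by exact_mod_cast hr')
  intro hone
  have habs : |r.slope| * |r'.slope| = 1 := by rw [← abs_mul, hone, abs_one]
  exact (mul_lt_one_of_nonneg_of_lt_one_right hle (abs_nonneg _) hlt).ne habs

end ShearletIndex

open ShearletIndex

/-- The Fourier transform of a vanishing linear combination of the shearlet system: a separable
part over `F₀` with shifts `m`, `n`, and one part for each cone. -/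
def IsFourierRelation {ι : Type*} (p q : ℝ → ℂ) (c₁ c₂ : ℝ) (F₀ : Finset ι) (α : ι → ℂ)
    (m n : ι → ℤ) (F₁ : Finset ShearletIndex) (β : ShearletIndex → ℂ) (F₂ : Finset ShearletIndex)
    (γ : ShearletIndex → ℂ) : Prop :=
  ∀ ξ η, ∑ i ∈ F₀, α i * (atomHat p c₁ 0 (m i) ξ * atomHat p c₁ 0 (n i) η) +
    shearedSum F₁ (fun r ↦ β r • waveletHat q c₁ r) (scalingHat p c₂) slope ξ η +
    shearedSum F₂ (fun r ↦ γ r • waveletHat q c₁ r) (scalingHat p c₂) slope η ξ = 0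

lemma tendsto_atomHat_cocompact {f : ℝ → ℂ} (hf : Tendsto f (cocompact ℝ) (𝓝 0)) (c : ℝ) (j : ℕ)
    (m : ℤ) : Tendsto (atomHat f c j m) (cocompact ℝ) (𝓝 0) := by
  have hdilate : Tendsto (fun t : ℝ ↦ t / 2 ^ j) (cocompact ℝ) (cocompact ℝ) :=
    (Homeomorph.mulRight₀ ((2 : ℝ) ^ j)⁻¹ (by positivity)).isClosedEmbedding.tendsto_cocompact
  refine squeeze_zero_norm (fun t ↦ ?_) (tendsto_zero_iff_norm_tendsto_zero.mp (hf.comp hdilate))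
  rw [atomHat, norm_mul, norm_fourierKernel, one_mul, Function.comp_apply]

section Relation

variable {p q A E D : ℝ → ℂ} {c₁ c₂ : ℝ} {ι : Type*} {F₀ : Finset ι} {α : ι → ℂ} {m n : ι → ℤ}
  {F₁ F₂ : Finset ShearletIndex} {β γ : ShearletIndex → ℂ} {a₁ a₂ : ℤ} {b N J : ℕ} {s : ℝ}

lemma IsFourierRelation.swap (hrel : IsFourierRelation p q c₁ c₂ F₀ α m n F₁ β F₂ γ) :
    IsFourierRelation p q c₁ c₂ F₀ α n m F₂ γ F₁ β := fun ξ η ↦ by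
  rw [← hrel η ξ]
  simp only [mul_comm (atomHat p c₁ 0 _ ξ)]
  ring

lemma IsFourierRelation.mono {F₁' F₂' : Finset ShearletIndex}
    (hrel : IsFourierRelation p q c₁ c₂ F₀ α m n F₁ β F₂ γ) (h₁ : F₁' ⊆ F₁) (h₂ : F₂' ⊆ F₂)
    (hβ : ∀ r ∈ F₁, r ∉ F₁' → β r = 0) (hγ : ∀ r ∈ F₂, r ∉ F₂' → γ r = 0) :
    IsFourierRelation p q c₁ c₂ F₀ α m n F₁' β F₂' γ := fun ξ η ↦ by
  rw [← hrel ξ η, shearedSum, shearedSum, shearedSum, shearedSum,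
    Finset.sum_subset h₁ fun r hr hr' ↦ by simp [hβ r hr hr'],
    Finset.sum_subset h₂ fun r hr hr' ↦ by simp [hγ r hr hr']]

lemma isClearablePair_shearlet (h : RefinablePair p q A E) (hD : IsCommonDenominator p D N)
    (hc₁ : c₁ * b = a₁) {r : ShearletIndex} (hr : r.scale < N) :
    IsClearablePair p D b N (waveletHat q c₁ r) (scalingHat p c₂ r) :=
  ⟨continuous_atomHat h.continuous_wavelet _ _ _, atomHat_wavelet_mem_approxSpace h hD hc₁ hr _,
    continuous_atomHat h.continuous_scaling _ _ _,
    tendsto_atomHat_cocompact h.tendsto_scaling _ _ _⟩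

lemma isClearablePair_scaling (h : RefinablePair p q A E) (hD : IsCommonDenominator p D N)
    (hc₁ : c₁ * b = a₁) (k l : ℤ) :
    IsClearablePair p D b N (atomHat p c₁ 0 k) (atomHat p c₁ 0 l) :=
  ⟨continuous_atomHat h.continuous_scaling _ _ _,
    atomHat_scaling_mem_approxSpace hD hc₁ N.zero_le _,
    continuous_atomHat h.continuous_scaling _ _ _,
    tendsto_atomHat_cocompact h.tendsto_scaling _ _ _⟩

lemma exists_forall_scale_lt (F : Finset ShearletIndex) : ∃ N, ∀ r ∈ F, r.scale < N :=
  ⟨F.sup scale + 1, fun _ hr ↦ Nat.lt_succ_of_le (Finset.le_sup (f := scale) hr)⟩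

lemma slopePart_shearlet_eq_zero (h : RefinablePair p q A E) (hb : 0 < b) (hc₁ : c₁ * b = a₁)
    (hrel : IsFourierRelation p q c₁ c₂ F₀ α m n F₁ β F₂ γ) (hs : s ≠ 0)
    (hsF₂ : ∀ r ∈ F₂, s * r.slope ≠ 1) (ξ t : ℝ) :
    slopePart F₁ (fun r ↦ β r • waveletHat q c₁ r) (scalingHat p c₂) slope s ξ t = 0 := by
  classical
  obtain ⟨N, hN⟩ := exists_forall_scale_lt (F₁ ∪ F₂)
  obtain ⟨D, hD⟩ := h.exists_isCommonDenominator N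
  have hpart := slopePart_eq_zero_of_isClearablePair h hD hb (F := F₁.disjSum F₀) (K := F₂)
    (U := Sum.elim (fun r ↦ β r • waveletHat q c₁ r) fun i ↦ α i • atomHat p c₁ 0 (m i))
    (V := Sum.elim (scalingHat p c₂) fun i ↦ atomHat p c₁ 0 (n i))
    (U' := fun r ↦ γ r • waveletHat q c₁ r) (V' := scalingHat p c₂)
    (σ := Sum.elim slope 0) (σ' := slope) ?_ ?_ ?_ hs hsF₂ ξ t
  · rwa [slopePart_disjSum, slopePart_zero hs, add_zero] at hpart
  · rintro (r | i) hr
    · exact (isClearablePair_shearlet h hD hc₁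
        (hN r (Finset.mem_union_left _ (Finset.inl_mem_disjSum.mp hr)))).const_smul _
    · exact (isClearablePair_scaling h hD hc₁ _ _).const_smul _
  · exact fun r hr ↦
      (isClearablePair_shearlet h hD hc₁ (hN r (Finset.mem_union_right _ hr))).const_smul _
  · intro ξ η
    rw [← hrel ξ η]
    simp only [shearedSum, Finset.sum_disjSum, Sum.elim_inl, Sum.elim_inr, Pi.zero_apply, zero_mul,
      sub_zero, Pi.smul_apply, smul_eq_mul, mul_assoc]
    ring

lemma linearIndepOn_shearlet (hp : AnalyticOnNhd ℝ p Set.univ) (hp0 : p ≠ 0) (hc₂ : c₂ ≠ 0)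
    (hq : LinearIndependent ℂ fun k : ℕ × ℤ ↦ atomHat q c₁ k.1 k.2) {S : Set ShearletIndex}
    (hS : ∀ r ∈ S, ∀ r' ∈ S, r.scale = r'.scale → r.shear = r'.shear) :
    LinearIndepOn ℂ (fun r (x : ℝ × ℝ) ↦ waveletHat q c₁ r x.1 * scalingHat p c₂ r x.2) S := by
  refine linearIndepOn_mul (f := fun k : ℕ × ℤ ↦ atomHat q c₁ k.1 k.2) (g := scalingHat p c₂)
    (e := fun r : ShearletIndex ↦ (r.scale, r.waveletShift)) hq fun k ↦ ?_
  have hfiber : ∀ r ∈ {r ∈ S | (r.scale, r.waveletShift) = k},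
      r.scale = k.1 ∧ r.waveletShift = k.2 := fun r hr ↦ Prod.ext_iff.mp hr.2
  have hinj : Function.Injective
      fun r : {r ∈ S | (r.scale, r.waveletShift) = k} ↦ r.1.scalingShift := by
    intro r r' hshift
    obtain ⟨hscale, hwavelet⟩ := hfiber r r.2
    obtain ⟨hscale', hwavelet'⟩ := hfiber r' r'.2
    have hscale_eq := hscale.trans hscale'.symm
    exact Subtype.ext (ShearletIndex.ext hscale_eq (hS r r.2.1 r' r'.2.1 hscale_eq)
      (hwavelet.trans hwavelet'.symm) hshift)
  rw [LinearIndepOn]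
  convert (linearIndependent_atomHat_of_analytic hp hp0 hc₂ (k.1 / 2)).comp _ hinj using 1
  ext r : 1
  simp only [scalingHat, Function.comp_apply, (hfiber r r.2).1]

lemma coeff_eq_zero_of_forall_sum_eq_zero (hp : AnalyticOnNhd ℝ p Set.univ) (hp0 : p ≠ 0)
    (hc₂ : c₂ ≠ 0) (hq : LinearIndependent ℂ fun k : ℕ × ℤ ↦ atomHat q c₁ k.1 k.2)
    {S : Finset ShearletIndex}
    (hS : ∀ r ∈ S, ∀ r' ∈ S, r.scale = r'.scale → r.shear = r'.shear)
    (hsum : ∀ ξ t, ∑ r ∈ S, (β r • waveletHat q c₁ r) ξ * scalingHat p c₂ r t = 0) :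
    ∀ r ∈ S, β r = 0 :=
  linearIndepOn_finset_iff.mp (linearIndepOn_shearlet hp hp0 hc₂ hq hS) β <| funext fun x ↦ by
    simpa [mul_assoc] using hsum x.1 x.2

lemma coeff_eq_zero_of_shear_ne_zero (h : RefinablePair p q A E) (hb : 0 < b) (hc₁ : c₁ * b = a₁)
    (hc₂ : c₂ ≠ 0) (hq : LinearIndependent ℂ fun k : ℕ × ℤ ↦ atomHat q c₁ k.1 k.2)
    (hrel : IsFourierRelation p q c₁ c₂ F₀ α m n F₁ β F₂ γ) {r : ShearletIndex} (hr : r ∈ F₁)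
    (hslope : ∀ r' ∈ F₂, r.slope * r'.slope ≠ 1) (hshear : r.shear ≠ 0) : β r = 0 := by
  classical
  refine coeff_eq_zero_of_forall_sum_eq_zero h.analytic_scaling h.scaling_ne_zero hc₂ hq ?_
    (slopePart_shearlet_eq_zero h hb hc₁ hrel (slope_eq_zero.not.mpr hshear) hslope) r
    (by simp [hr])
  intro r₁ hr₁ r₂ hr₂ hscale
  exact shear_eq_of_slope_eq hscale
    ((Finset.mem_filter.mp hr₁).2.trans (Finset.mem_filter.mp hr₂).2.symm)

open Classical in
lemma topPart_eq_zero (h : RefinablePair p q A E)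
    (hdet : ∃ w, A w * E (w + 1 / 2) ≠ A (w + 1 / 2) * E w)
    (hb : Odd b) (hc₁ : c₁ * b = a₁) (hc₂ : c₂ * b = a₂)
    (hrel : IsFourierRelation p q c₁ c₂ F₀ α m n F₁ β F₂ γ)
    (hF₁ : ∀ r ∈ F₁, r.shear = 0 ∧ r.scale ≤ J) (hF₂ : ∀ r ∈ F₂, r.shear = 0 ∧ r.scale ≤ J)
    (η : ℝ) :
    ∑ r ∈ F₁ with r.scale = J, (β r * scalingHat p c₂ r η) • waveletHat q c₁ r = 0 := by
  obtain ⟨D, hD⟩ := h.exists_isCommonDenominator J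
  have hrest : ∑ i ∈ F₀, (α i * atomHat p c₁ 0 (n i) η) • atomHat p c₁ 0 (m i) +
      ∑ r ∈ F₁ with r.scale ≠ J, (β r * scalingHat p c₂ r η) • waveletHat q c₁ r +
      ∑ r ∈ F₂, (γ r * waveletHat q c₁ r η) • scalingHat p c₂ r ∈ approxSpace p D b J := by
    refine add_mem (add_mem ?_ ?_) ?_ <;>
      refine sum_mem fun r hr ↦ Submodule.smul_mem _ _ ?_
    · exact atomHat_scaling_mem_approxSpace hD hc₁ J.zero_le _
    · obtain ⟨hr, hscale⟩ := Finset.mem_filter.mp hr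
      exact atomHat_wavelet_mem_approxSpace h hD hc₁ ((hF₁ r hr).2.lt_of_ne hscale) _
    · exact atomHat_scaling_mem_approxSpace hD hc₂ ((Nat.div_le_self _ 2).trans (hF₂ r hr).2) _
  have hspan : ∑ r ∈ F₁ with r.scale = J, (β r * scalingHat p c₂ r η) • waveletHat q c₁ r ∈
      Submodule.span ℂ (Set.range (atomHat q c₁ J)) := by
    refine sum_mem fun r hr ↦ Submodule.smul_mem _ _ (Submodule.subset_span ⟨r.waveletShift, ?_⟩)
    rw [waveletHat, (Finset.mem_filter.mp hr).2]
  refine eq_zero_of_mem_span_atomHat_of_mem_approxSpace h hdet hD hb hc₁ hspan ?_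
  convert neg_mem hrest using 1
  ext ξ
  have hξ := hrel ξ η
  have hflat₁ : ∀ r ∈ F₁, r.slope = 0 := fun r hr ↦ slope_eq_zero.mpr (hF₁ r hr).1
  have hflat₂ : ∀ r ∈ F₂, r.slope = 0 := fun r hr ↦ slope_eq_zero.mpr (hF₂ r hr).1
  rw [shearedSum_of_forall_eq_zero hflat₁, shearedSum_of_forall_eq_zero hflat₂,
    ← Finset.sum_filter_add_sum_filter_not F₁ (fun r ↦ r.scale = J)] at hξ
  simp only [Finset.sum_apply, Pi.smul_apply, Pi.add_apply, Pi.neg_apply, smul_eq_mul,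
    mul_right_comm _ (scalingHat p c₂ _ η), mul_right_comm _ (atomHat p c₁ 0 _ η),
    mul_assoc] at hξ ⊢
  linear_combination hξ

lemma coeff_eq_zero_of_scale_eq (h : RefinablePair p q A E)
    (hdet : ∃ w, A w * E (w + 1 / 2) ≠ A (w + 1 / 2) * E w)
    (hb : Odd b) (hc₁ : c₁ * b = a₁) (hc₂ : c₂ * b = a₂) (hc₂0 : c₂ ≠ 0)
    (hq : LinearIndependent ℂ fun k : ℕ × ℤ ↦ atomHat q c₁ k.1 k.2)
    (hrel : IsFourierRelation p q c₁ c₂ F₀ α m n F₁ β F₂ γ)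
    (hF₁ : ∀ r ∈ F₁, r.shear = 0 ∧ r.scale ≤ J) (hF₂ : ∀ r ∈ F₂, r.shear = 0 ∧ r.scale ≤ J)
    {r : ShearletIndex} (hr : r ∈ F₁) (hscale : r.scale = J) : β r = 0 := by
  classical
  refine coeff_eq_zero_of_forall_sum_eq_zero h.analytic_scaling h.scaling_ne_zero hc₂0 hq
    (S := {r ∈ F₁ | r.scale = J}) (fun r₁ hr₁ r₂ hr₂ _ ↦ ?_) (fun ξ t ↦ ?_) r
    (Finset.mem_filter.mpr ⟨hr, hscale⟩)
  · rw [(hF₁ r₁ (Finset.mem_filter.mp hr₁).1).1, (hF₁ r₂ (Finset.mem_filter.mp hr₂).1).1]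
  · have htop := congrFun (topPart_eq_zero h hdet hb hc₁ hc₂ hrel hF₁ hF₂ t) ξ
    simp only [Finset.sum_apply, Pi.smul_apply, smul_eq_mul, Pi.zero_apply] at htop ⊢
    simpa only [mul_right_comm] using htop

lemma eq_empty_of_coeff_ne_zero_of_shear_eq_zero (h : RefinablePair p q A E)
    (hdet : ∃ w, A w * E (w + 1 / 2) ≠ A (w + 1 / 2) * E w)
    (hb : Odd b) (hc₁ : c₁ * b = a₁) (hc₂ : c₂ * b = a₂) (hc₂0 : c₂ ≠ 0)
    (hq : LinearIndependent ℂ fun k : ℕ × ℤ ↦ atomHat q c₁ k.1 k.2)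
    (hrel : IsFourierRelation p q c₁ c₂ F₀ α m n F₁ β F₂ γ)
    (hF₁ : ∀ r ∈ F₁, r.shear = 0 ∧ β r ≠ 0) (hF₂ : ∀ r ∈ F₂, r.shear = 0 ∧ γ r ≠ 0) :
    F₁ = ∅ ∧ F₂ = ∅ := by
  classical
  rw [← Finset.union_eq_empty]
  by_contra hne
  obtain ⟨r, hr, hmax⟩ := Finset.exists_max_image _ scale (Finset.nonempty_iff_ne_empty.mpr hne)
  have hF₁' : ∀ r' ∈ F₁, r'.shear = 0 ∧ r'.scale ≤ r.scale := fun r' hr' ↦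
    ⟨(hF₁ r' hr').1, hmax r' (Finset.mem_union_left _ hr')⟩
  have hF₂' : ∀ r' ∈ F₂, r'.shear = 0 ∧ r'.scale ≤ r.scale := fun r' hr' ↦
    ⟨(hF₂ r' hr').1, hmax r' (Finset.mem_union_right _ hr')⟩
  rcases Finset.mem_union.mp hr with hr | hr
  · exact (hF₁ r hr).2
      (coeff_eq_zero_of_scale_eq h hdet hb hc₁ hc₂ hc₂0 hq hrel hF₁' hF₂' hr rfl)
  · exact (hF₂ r hr).2
      (coeff_eq_zero_of_scale_eq h hdet hb hc₁ hc₂ hc₂0 hq hrel.swap hF₂' hF₁' hr rfl)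

lemma shearlet_coeff_eq_zero (h : RefinablePair p q A E)
    (hdet : ∃ w, A w * E (w + 1 / 2) ≠ A (w + 1 / 2) * E w)
    (hb : Odd b) (hc₁ : c₁ * b = a₁) (hc₂ : c₂ * b = a₂) (hc₂0 : c₂ ≠ 0)
    (hq : LinearIndependent ℂ fun k : ℕ × ℤ ↦ atomHat q c₁ k.1 k.2)
    (hrel : IsFourierRelation p q c₁ c₂ F₀ α m n F₁ β F₂ γ)
    (hslope : ∀ r ∈ F₁, ∀ r' ∈ F₂, r.slope * r'.slope ≠ 1) :
    (∀ r ∈ F₁, β r = 0) ∧ ∀ r ∈ F₂, γ r = 0 := by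
  classical
  have hshear₁ : ∀ r ∈ F₁, β r ≠ 0 → r.shear = 0 := fun r hr ↦ not_imp_comm.mp
    (coeff_eq_zero_of_shear_ne_zero h hb.pos hc₁ hc₂0 hq hrel hr (hslope r hr))
  have hshear₂ : ∀ r ∈ F₂, γ r ≠ 0 → r.shear = 0 := fun r hr ↦ not_imp_comm.mp
    (coeff_eq_zero_of_shear_ne_zero h hb.pos hc₁ hc₂0 hq hrel.swap hr fun r' hr' ↦
      mul_comm r'.slope r.slope ▸ hslope r' hr' r hr)
  have hrel_support : IsFourierRelation p q c₁ c₂ F₀ α m n {r ∈ F₁ | β r ≠ 0} β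
      {r ∈ F₂ | γ r ≠ 0} γ :=
    hrel.mono (Finset.filter_subset _ _) (Finset.filter_subset _ _)
      (fun r hr hr' ↦ by simpa [hr] using hr') fun r hr hr' ↦ by simpa [hr] using hr'
  have hempty := eq_empty_of_coeff_ne_zero_of_shear_eq_zero h hdet hb hc₁ hc₂ hc₂0 hq hrel_support
    (fun r hr ↦ by
      obtain ⟨hr, hβ⟩ := Finset.mem_filter.mp hr
      exact ⟨hshear₁ r hr hβ, hβ⟩)
    (fun r hr ↦ by
      obtain ⟨hr, hγ⟩ := Finset.mem_filter.mp hr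
      exact ⟨hshear₂ r hr hγ, hγ⟩)
  simpa only [Finset.filter_eq_empty_iff, not_not] using hempty

lemma scaling_coeff_eq_zero (hp : AnalyticOnNhd ℝ p Set.univ) (hp0 : p ≠ 0) (hc₁ : c₁ ≠ 0)
    {F₀ : Finset (ℤ × ℤ)} {α : ℤ × ℤ → ℂ}
    (hrel : IsFourierRelation p q c₁ c₂ F₀ α Prod.fst Prod.snd ∅ β ∅ γ) : ∀ i ∈ F₀, α i = 0 := by
  have hatom := linearIndependent_atomHat_of_analytic hp hp0 hc₁ 0
  have hprod : LinearIndepOn ℂ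
      (fun (i : ℤ × ℤ) (x : ℝ × ℝ) ↦ atomHat p c₁ 0 i.1 x.1 * atomHat p c₁ 0 i.2 x.2) F₀ := by
    refine linearIndepOn_mul (f := atomHat p c₁ 0) (g := fun i : ℤ × ℤ ↦ atomHat p c₁ 0 i.2)
      (e := Prod.fst) hatom fun k ↦ ?_
    have hinj : Function.Injective fun i : {i : ℤ × ℤ | i ∈ (F₀ : Set (ℤ × ℤ)) ∧ i.1 = k} ↦ i.1.2 :=
      fun i i' hi ↦ Subtype.ext (Prod.ext (i.2.2.trans i'.2.2.symm) hi)
    rw [LinearIndepOn]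
    exact hatom.comp _ hinj
  exact linearIndepOn_finset_iff.mp hprod α (funext fun x ↦ by
    simpa [shearedSum] using hrel x.1 x.2)

theorem coeff_eq_zero_of_isFourierRelation (h : RefinablePair p q A E)
    (hdet : ∃ w, A w * E (w + 1 / 2) ≠ A (w + 1 / 2) * E w)
    (hb : Odd b) (hc₁ : c₁ * b = a₁) (hc₂ : c₂ * b = a₂) (hc₁0 : c₁ ≠ 0) (hc₂0 : c₂ ≠ 0)
    (hq : LinearIndependent ℂ fun k : ℕ × ℤ ↦ atomHat q c₁ k.1 k.2)
    {F₀ : Finset (ℤ × ℤ)} {α : ℤ × ℤ → ℂ}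
    (hrel : IsFourierRelation p q c₁ c₂ F₀ α Prod.fst Prod.snd F₁ β F₂ γ)
    (hF₁ : ∀ r ∈ F₁, |r.shear| ≤ 2 ^ (r.scale / 2))
    (hF₂ : ∀ r ∈ F₂, |r.shear| < 2 ^ (r.scale / 2)) :
    (∀ i ∈ F₀, α i = 0) ∧ (∀ r ∈ F₁, β r = 0) ∧ ∀ r ∈ F₂, γ r = 0 := by
  obtain ⟨hβ, hγ⟩ := shearlet_coeff_eq_zero h hdet hb hc₁ hc₂ hc₂0 hq hrel fun r hr r' hr' ↦
    slope_mul_slope_ne_one (hF₁ r hr) (hF₂ r' hr')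
  have hrel_empty := hrel.mono (Finset.empty_subset _) (Finset.empty_subset _)
    (fun r hr _ ↦ hβ r hr) fun r hr _ ↦ hγ r hr
  exact ⟨scaling_coeff_eq_zero h.analytic_scaling h.scaling_ne_zero hc₁0 hrel_empty, hβ, hγ⟩

end Relation

/-! ### The two-dimensional Fourier transform -/

/-- The two-dimensional Fourier transform, as a function of the two real frequencies. -/
noncomputable def fourier₂ (f : ℝ × ℝ → ℂ) (ξ η : ℝ) : ℂ :=
  ∫ z, fourierKernel (z.1 * ξ) * fourierKernel (z.2 * η) * f z

section Fourier₂

variable {f g : ℝ × ℝ → ℂ}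

lemma integrable_fourierKernel_mul_mul (hf : Integrable f) (ξ η : ℝ) :
    Integrable fun z ↦ fourierKernel (z.1 * ξ) * fourierKernel (z.2 * η) * f z :=
  hf.bdd_mul (c := 1) (Continuous.aestronglyMeasurable (by fun_prop))
    (Eventually.of_forall fun z ↦ by simp [norm_fourierKernel])

lemma fourier₂_add (hf : Integrable f) (hg : Integrable g) (ξ η : ℝ) :
    fourier₂ (fun z ↦ f z + g z) ξ η = fourier₂ f ξ η + fourier₂ g ξ η := by
  simp only [fourier₂, mul_add]
  exact integral_add (integrable_fourierKernel_mul_mul hf ξ η)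
    (integrable_fourierKernel_mul_mul hg ξ η)

lemma fourier₂_const_mul (a : ℂ) (f : ℝ × ℝ → ℂ) (ξ η : ℝ) :
    fourier₂ (fun z ↦ a * f z) ξ η = a * fourier₂ f ξ η := by
  simp only [fourier₂, mul_left_comm _ a, integral_const_mul]

lemma fourier₂_sum_mul {ι : Type*} (F : Finset ι) (a : ι → ℂ) {f : ι → ℝ × ℝ → ℂ}
    (hf : ∀ i, Integrable (f i)) (ξ η : ℝ) :
    fourier₂ (fun z ↦ ∑ i ∈ F, a i * f i z) ξ η = ∑ i ∈ F, a i * fourier₂ (f i) ξ η := by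
  simp only [fourier₂, Finset.mul_sum, mul_left_comm _ (a _)]
  rw [integral_finsetSum F fun i _ ↦
    (integrable_fourierKernel_mul_mul (hf i) ξ η).const_mul (a i)]
  simp only [integral_const_mul]

lemma fourier₂_comp_swap (f : ℝ × ℝ → ℂ) (ξ η : ℝ) :
    fourier₂ (fun z ↦ f z.swap) ξ η = fourier₂ f η ξ := by
  rw [fourier₂, fourier₂, Measure.volume_eq_prod, ← integral_prod_swap]
  simp only [Prod.fst_swap, Prod.snd_swap, Prod.swap_swap, mul_comm (fourierKernel (_ * ξ))]

end Fourier₂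

section ShearedProduct

variable {f g : ℝ → ℂ}

lemma integrable_sheared_mul (hf : Integrable f) (hg : Integrable g) (d : ℝ) :
    Integrable fun z : ℝ × ℝ ↦ f (z.1 + d * z.2) * g z.2 := by
  have hshear : MeasurePreserving (fun z : ℝ × ℝ ↦ (z.1, z.2 + d * z.1)) :=
    (MeasurePreserving.id volume).skew_product (g := fun x y ↦ y + d * x) (by fun_prop)
      (Eventually.of_forall fun x ↦ (measurePreserving_add_right volume (d * x)).map_eq)
  exact (hshear.integrable_comp_of_integrable (hg.mul_prod hf)).swap.congr
    (Eventually.of_forall fun z ↦ mul_comm _ _)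

lemma fourier₂_sheared_mul (hf : Integrable f) (hg : Integrable g) (d ξ η : ℝ) :
    fourier₂ (fun z ↦ f (z.1 + d * z.2) * g z.2) ξ η = 𝓕 f ξ * 𝓕 g (η - d * ξ) := by
  have hint := integrable_fourierKernel_mul_mul (integrable_sheared_mul hf hg d) ξ η
  rw [Measure.volume_eq_prod] at hint
  rw [fourier₂, Measure.volume_eq_prod, integral_prod_symm _ hint,
    fourier_eq_integral_fourierKernel g, ← integral_const_mul]
  congr 1 with y
  rw [fourier_eq_integral_fourierKernel f, ← integral_mul_const,
    ← integral_add_right_eq_self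
      (fun x ↦ fourierKernel (x * ξ) * f x * (fourierKernel (y * (η - d * ξ)) * g y)) (d * y)]
  congr 1 with x
  have hkernel : fourierKernel (x * ξ) * fourierKernel (y * η) =
      fourierKernel ((x + d * y) * ξ) * fourierKernel (y * (η - d * ξ)) := by
    rw [← fourierKernel_add, ← fourierKernel_add]
    congr 1
    ring
  rw [hkernel]
  ring

end ShearedProduct

/-! ### Linear independence of shearlets -/

open ShearletIndex

/-- The separable function `φ(x₁ - c m₁) φ(x₂ - c m₂)`. -/
def scalingAtom (φ : ℝ → ℂ) (c : ℝ) (m : ℤ × ℤ) (x : ℝ × ℝ) : ℂ :=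
  φ (x.1 - c * m.1) * φ (x.2 - c * m.2)

/-- The shearlet
`2^{3j/4} ψ(2^j x₁ + 2^⌊j/2⌋ k x₂ - c₁ m₁) φ(2^⌊j/2⌋ x₂ - c₂ m₂)`, where `j`, `k`, `m₁`, `m₂` are
the entries of the index. Those of the other cone are obtained by swapping `x₁` and `x₂`. -/
noncomputable def shearlet (φ ψ : ℝ → ℂ) (c₁ c₂ : ℝ) (r : ShearletIndex) (x : ℝ × ℝ) : ℂ :=
  ((2 ^ (3 * (r.scale : ℝ) / 4) : ℝ) : ℂ) *
    ψ (2 ^ r.scale * x.1 + 2 ^ (r.scale / 2) * r.shear * x.2 - c₁ * r.waveletShift) *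
    φ (2 ^ (r.scale / 2) * x.2 - c₂ * r.scalingShift)

/-- The normalization of the Fourier transform of a shearlet: the factor `2^{3j/4}` divided by the
Jacobian `2^j 2^⌊j/2⌋`. -/
noncomputable def ShearletIndex.weight (r : ShearletIndex) : ℂ :=
  ((2 ^ (3 * (r.scale : ℝ) / 4) : ℝ) : ℂ) * (((2 : ℂ) ^ r.scale)⁻¹ * ((2 : ℂ) ^ (r.scale / 2))⁻¹)

lemma ShearletIndex.weight_ne_zero (r : ShearletIndex) : r.weight ≠ 0 := by
  have hpow : (2 : ℝ) ^ (3 * (r.scale : ℝ) / 4) ≠ 0 := by positivity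
  exact mul_ne_zero (Complex.ofReal_ne_zero.mpr hpow) (by simp)

section Shearlet

variable {φ ψ : ℝ → ℂ} {c₁ c₂ : ℝ}

lemma integrable_scalingAtom (hφc : Continuous φ) (hφs : HasCompactSupport φ) (m : ℤ × ℤ) :
    Integrable (scalingAtom φ c₁ m) := by
  unfold scalingAtom
  simpa using integrable_sheared_mul
    (integrable_comp_mul_sub hφc hφs one_ne_zero (c₁ * m.1))
    (integrable_comp_mul_sub hφc hφs one_ne_zero (c₁ * m.2)) 0

lemma fourier₂_scalingAtom (hφc : Continuous φ) (hφs : HasCompactSupport φ) (m : ℤ × ℤ)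
    (ξ η : ℝ) : fourier₂ (scalingAtom φ c₁ m) ξ η =
      atomHat (𝓕 φ) c₁ 0 m.1 ξ * atomHat (𝓕 φ) c₁ 0 m.2 η := by
  have hφ (k : ℤ) : 𝓕 (fun x ↦ φ (1 * x - c₁ * k)) = atomHat (𝓕 φ) c₁ 0 k := by
    simpa using fourier_comp_two_pow_mul_sub φ c₁ 0 k
  have hprod := fourier₂_sheared_mul (integrable_comp_mul_sub hφc hφs one_ne_zero (c₁ * m.1))
    (integrable_comp_mul_sub hφc hφs one_ne_zero (c₁ * m.2)) 0 ξ η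
  rw [hφ, hφ] at hprod
  unfold scalingAtom
  simpa using hprod

lemma shearlet_eq_sheared_mul (φ ψ : ℝ → ℂ) (c₁ c₂ : ℝ) (r : ShearletIndex) (x : ℝ × ℝ) :
    shearlet φ ψ c₁ c₂ r x = ((2 ^ (3 * (r.scale : ℝ) / 4) : ℝ) : ℂ) *
      (ψ (2 ^ r.scale * (x.1 + r.slope * x.2) - c₁ * r.waveletShift) *
        φ (2 ^ (r.scale / 2) * x.2 - c₂ * r.scalingShift)) := by
  have hshear : 2 ^ r.scale * (x.1 + r.slope * x.2) =
      2 ^ r.scale * x.1 + 2 ^ (r.scale / 2) * r.shear * x.2 := by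
    rw [ShearletIndex.slope]
    field_simp
  rw [shearlet, hshear, mul_assoc]

variable (hφc : Continuous φ) (hφs : HasCompactSupport φ) (hψc : Continuous ψ)
  (hψs : HasCompactSupport ψ)
include hφc hφs hψc hψs

lemma integrable_shearlet (r : ShearletIndex) : Integrable (shearlet φ ψ c₁ c₂ r) := by
  simp only [funext (shearlet_eq_sheared_mul φ ψ c₁ c₂ r)]
  exact (integrable_sheared_mul (integrable_comp_mul_sub hψc hψs (by positivity) _)
    (integrable_comp_mul_sub hφc hφs (by positivity) _) _).const_mul _

lemma fourier₂_shearlet (r : ShearletIndex) (ξ η : ℝ) :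
    fourier₂ (shearlet φ ψ c₁ c₂ r) ξ η =
      r.weight * (waveletHat (𝓕 ψ) c₁ r ξ * scalingHat (𝓕 φ) c₂ r (η - r.slope * ξ)) := by
  have hψ := integrable_comp_mul_sub hψc hψs (a := 2 ^ r.scale) (by positivity)
    (c₁ * r.waveletShift)
  have hφ := integrable_comp_mul_sub hφc hφs (a := 2 ^ (r.scale / 2)) (by positivity)
    (c₂ * r.scalingShift)
  rw [funext (shearlet_eq_sheared_mul φ ψ c₁ c₂ r), fourier₂_const_mul, fourier₂_sheared_mul hψ hφ,
    fourier_comp_two_pow_mul_sub, fourier_comp_two_pow_mul_sub, weight, waveletHat, scalingHat]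
  simp only [Pi.smul_apply, smul_eq_mul]
  ring

lemma isFourierRelation_of_sum_eq_zero {F₀ : Finset (ℤ × ℤ)} {F₁ F₂ : Finset ShearletIndex}
    {α : ℤ × ℤ → ℂ} {β γ : ShearletIndex → ℂ}
    (hsum : ∀ x, ∑ m ∈ F₀, α m * scalingAtom φ c₁ m x +
      ∑ r ∈ F₁, β r * shearlet φ ψ c₁ c₂ r x +
      ∑ r ∈ F₂, γ r * shearlet φ ψ c₁ c₂ r x.swap = 0) :
    IsFourierRelation (𝓕 φ) (𝓕 ψ) c₁ c₂ F₀ α Prod.fst Prod.snd F₁ (fun r ↦ β r * r.weight)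
      F₂ (fun r ↦ γ r * r.weight) := by
  intro ξ η
  have hscaling := integrable_scalingAtom hφc hφs (c₁ := c₁)
  have hcone := integrable_shearlet hφc hφs hψc hψs (c₁ := c₁) (c₂ := c₂)
  have hdual (r : ShearletIndex) :
      Integrable fun x : ℝ × ℝ ↦ shearlet φ ψ c₁ c₂ r x.swap := (hcone r).swap
  have hint₀ := integrable_finsetSum F₀ fun m _ ↦ (hscaling m).const_mul (α m)
  have hint₁ := integrable_finsetSum F₁ fun r _ ↦ (hcone r).const_mul (β r)
  have hint₂ := integrable_finsetSum F₂ fun r _ ↦ (hdual r).const_mul (γ r)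
  have hfourier : fourier₂ (fun x ↦ ∑ m ∈ F₀, α m * scalingAtom φ c₁ m x +
      ∑ r ∈ F₁, β r * shearlet φ ψ c₁ c₂ r x +
      ∑ r ∈ F₂, γ r * shearlet φ ψ c₁ c₂ r x.swap) ξ η = 0 := by
    simp [hsum, fourier₂]
  rw [fourier₂_add (f := fun x ↦ _ + _) (hint₀.add hint₁) hint₂, fourier₂_add hint₀ hint₁,
    fourier₂_sum_mul _ _ hscaling, fourier₂_sum_mul _ _ hcone,
    fourier₂_sum_mul _ _ hdual] at hfourier
  simpa only [fourier₂_comp_swap, fourier₂_scalingAtom hφc hφs,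
    fourier₂_shearlet hφc hφs hψc hψs, shearedSum, Pi.smul_apply, smul_eq_mul, mul_assoc]
    using hfourier

end Shearlet

/-- Reads `(j, k, m)` as the index of `ψ_{j,k,m}`. -/
def coneIndex : ℕ × ℤ × ℤ × ℤ ≃ ShearletIndex where
  toFun p := ⟨p.1, p.2.1, p.2.2.1, p.2.2.2⟩
  invFun r := (r.scale, r.shear, r.waveletShift, r.scalingShift)

/-- Reads `(j, k, m)` as the index of `ψ̃_{j,k,m}`, whose second translation belongs to the
wavelet. -/
def dualConeIndex : ℕ × ℤ × ℤ × ℤ ≃ ShearletIndex where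
  toFun p := ⟨p.1, p.2.1, p.2.2.2, p.2.2.1⟩
  invFun r := (r.scale, r.shear, r.scalingShift, r.waveletShift)

end Shearlet

open Shearlet in
theorem stmt5_general {φ ψ : ℝ → ℂ} {c₁ c₂ : ℝ}
    (hφc : Continuous φ) (hφs : HasCompactSupport φ) (hφ0 : φ ≠ 0)
    (hφorth : Pairwise fun m n : ℤ ↦ ∫ x : ℝ, (starRingEnd ℂ) (φ (x - m)) * φ (x - n) = 0)
    (hψc : Continuous ψ) (hψs : HasCompactSupport ψ)
    (hψorth : ∀ k l : ℤ, ∫ x : ℝ, (starRingEnd ℂ) (ψ (x - k)) * ψ (2 * x - l) = 0)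
    (hψspan : ∀ a ∈ ({2, 4} : Set ℝ), ∀ ε : ℝ, 0 < ε → ∃ (F : Finset ℤ) (c : ℤ → ℂ),
      eLpNorm (fun x ↦ ψ x - ∑ k ∈ F, c k * φ (a * x - k)) 2 volume < ENNReal.ofReal ε)
    {b : ℕ} {a₁ a₂ : ℤ} (hb : Odd b) (hc₁ : c₁ * b = a₁) (hc₂ : c₂ * b = a₂) (hc₁0 : c₁ ≠ 0)
    (hc₂0 : c₂ ≠ 0)
    (hψind : LinearIndependent ℂ fun (p : ℕ × ℤ) (x : ℝ) ↦ ψ (2 ^ p.1 * x - c₁ * p.2))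
    (F₀ : Finset (ℤ × ℤ)) (F₁ F₂ : Finset (ℕ × ℤ × ℤ × ℤ))
    (α : ℤ × ℤ → ℂ) (β γ : ℕ × ℤ × ℤ × ℤ → ℂ)
    (hF₁ : ∀ p ∈ F₁, |p.2.1| ≤ (2 : ℤ) ^ (p.1 / 2))
    (hF₂ : ∀ p ∈ F₂, |p.2.1| ≤ (2 : ℤ) ^ (p.1 / 2) - 1)
    (hsum : (fun x : ℝ × ℝ ↦
          (∑ m ∈ F₀, α m * (φ (x.1 - c₁ * m.1) * φ (x.2 - c₁ * m.2))) +
          (∑ p ∈ F₁, β p * ((((2 : ℝ) ^ ((3 * (p.1 : ℝ)) / 4) : ℝ) : ℂ) *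
            ψ ((2 : ℝ) ^ p.1 * x.1 + (2 : ℝ) ^ (p.1 / 2) * (p.2.1 : ℝ) * x.2 - c₁ * p.2.2.1) *
            φ ((2 : ℝ) ^ (p.1 / 2) * x.2 - c₂ * p.2.2.2))) +
          (∑ p ∈ F₂, γ p * ((((2 : ℝ) ^ ((3 * (p.1 : ℝ)) / 4) : ℝ) : ℂ) *
            φ ((2 : ℝ) ^ (p.1 / 2) * x.1 - c₂ * p.2.2.1) *
            ψ ((2 : ℝ) ^ p.1 * x.2 + (2 : ℝ) ^ (p.1 / 2) * (p.2.1 : ℝ) * x.1 - c₁ * p.2.2.2))))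
        =ᵐ[volume] 0) :
    (∀ m ∈ F₀, α m = 0) ∧ (∀ p ∈ F₁, β p = 0) ∧ ∀ p ∈ F₂, γ p = 0 := by
  have hsum_zero := congrFun
    ((Continuous.ae_eq_iff_eq volume (by fun_prop) continuous_zero).mp hsum)
  have hrel := isFourierRelation_of_sum_eq_zero hφc hφs hψc hψs (F₀ := F₀) (α := α)
    (F₁ := F₁.map coneIndex.toEmbedding) (β := β ∘ coneIndex.symm)
    (F₂ := F₂.map dualConeIndex.toEmbedding) (γ := γ ∘ dualConeIndex.symm) fun x ↦ by
      simpa [scalingAtom, shearlet, coneIndex, dualConeIndex, mul_right_comm _ (φ _)] using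
        hsum_zero x
  have hψ0 : ψ ≠ 0 := fun h ↦ hψind.ne_zero (0, 0) (funext fun x ↦ by simp [h])
  obtain ⟨A, E, hpair⟩ := exists_refinablePair_fourier hφc hφs hφ0 hφorth hψc hψs hψ0 hψspan
  have hdet := exists_det_ne_of_orthogonal hψc hψs hψorth hpair
  have hcoeff := coeff_eq_zero_of_isFourierRelation hpair hdet hb hc₁ hc₂ hc₁0 hc₂0
    (linearIndependent_atomHat_fourier hψc hψs hψind) hrel (Finset.forall_mem_map.mpr hF₁)
    (Finset.forall_mem_map.mpr fun p hp ↦ Int.lt_of_le_sub_one (hF₂ p hp))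
  simpa only [Finset.forall_mem_map, Function.comp_apply, Equiv.coe_toEmbedding,
    Equiv.symm_apply_apply, mul_eq_zero, ShearletIndex.weight_ne_zero, or_false] using hcoeff

/-- Under the admissibility hypotheses, the full cone-adapted shearlet
system `SH(φ, ψ, ψ̃, c)` — translates of `φ¹ ⊗ φ¹`, the cone
`ψ_{j,k,m}(x₁,x₂) = 2^(3j/4) ψ¹(2^j x₁ + 2^⌊j/2⌋ k x₂ - c₁m₁) φ¹(2^⌊j/2⌋ x₂ - c₂m₂)` for
`|k| ≤ 2^⌊j/2⌋`, and the cone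
`ψ̃_{j,k,m}(x₁,x₂) = 2^(3j/4) φ¹(2^⌊j/2⌋ x₁ - c₂m₁) ψ¹(2^j x₂ + 2^⌊j/2⌋ k x₁ - c₁m₂)` for
`|k| ≤ 2^⌊j/2⌋ - 1` — is linearly independent in `L²(ℝ²)`. -/
theorem stmt5
    -- admissibility hypotheses on φ¹ (= φ) and ψ¹ (= ψ)
    (s : ℝ) (hs : 0 < s) (φ ψ : ℝ → ℂ)
    (hφc : Continuous φ) (hφsupp : tsupport φ = Set.Icc 0 s)
    (hφON : ∀ m m' : ℤ,
      (∫ x : ℝ, (starRingEnd ℂ) (φ (x - m)) * φ (x - m')) = if m = m' then 1 else 0)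
    (hψc : Continuous ψ) (hψcs : HasCompactSupport ψ)
    (hψorth : ∀ (j j' : ℕ) (l l' : ℤ), (j, l) ≠ (j', l') →
      (∫ x : ℝ, (starRingEnd ℂ) (ψ ((2 : ℝ) ^ j * x - l)) * ψ ((2 : ℝ) ^ j' * x - l')) = 0)
    (hψne : ∀ (j : ℕ) (l : ℤ), (fun x : ℝ => ψ ((2 : ℝ) ^ j * x - l)) ≠ 0)
    (hψspan : ∀ (J j : ℕ), j ≤ J → ∀ l : ℤ, ∀ ε : ℝ, 0 < ε →
      ∃ (F : Finset ℤ) (a : ℤ → ℂ),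
        eLpNorm (fun x : ℝ =>
            ψ ((2 : ℝ) ^ j * x - l) - ∑ k ∈ F, a k * φ ((2 : ℝ) ^ (J + 1) * x - k)) 2 volume
          < ENNReal.ofReal ε)
    -- sampling constants
    (a₁ b₁ a₂ b₂ : ℕ) (ha₁ : 0 < a₁) (ha₂ : 0 < a₂) (hb₁ : 0 < b₁) (hb₂ : 0 < b₂)
    (hb₁odd : Odd b₁) (hb₂odd : Odd b₂)
    (c₁ c₂ : ℝ) (hc₁ : c₁ = (a₁ : ℝ) / b₁) (hc₂ : c₂ = (a₂ : ℝ) / b₂)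
    -- linear independence of the sampled 1D wavelet system
    (h1d : ∀ c : ℝ, (c = c₁ ∨ c = c₂) →
      ∀ (F : Finset ℤ) (G : Finset (ℕ × ℤ)) (α : ℤ → ℂ) (β : ℕ × ℤ → ℂ),
        (fun x : ℝ => ∑ m ∈ F, α m * φ (x - c * m) +
            ∑ p ∈ G, β p * ψ ((2 : ℝ) ^ p.1 * x - c * p.2)) = 0 →
        (∀ m ∈ F, α m = 0) ∧ ∀ p ∈ G, β p = 0) :
    -- conclusion: linear independence of SH(φ, ψ, ψ̃, c) in L²(ℝ²)
    ∀ (F₀ : Finset (ℤ × ℤ)) (F₁ F₂ : Finset (ℕ × ℤ × ℤ × ℤ))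
      (α : ℤ × ℤ → ℂ) (β γ : ℕ × ℤ × ℤ × ℤ → ℂ),
      (∀ p ∈ F₁, |p.2.1| ≤ (2 : ℤ) ^ (p.1 / 2)) →
      (∀ p ∈ F₂, |p.2.1| ≤ (2 : ℤ) ^ (p.1 / 2) - 1) →
      (fun x : ℝ × ℝ =>
          (∑ m ∈ F₀, α m * (φ (x.1 - c₁ * m.1) * φ (x.2 - c₁ * m.2))) +
          (∑ p ∈ F₁, β p * ((((2 : ℝ) ^ ((3 * (p.1 : ℝ)) / 4) : ℝ) : ℂ) *
            ψ ((2 : ℝ) ^ p.1 * x.1 + (2 : ℝ) ^ (p.1 / 2) * (p.2.1 : ℝ) * x.2 - c₁ * p.2.2.1) *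
            φ ((2 : ℝ) ^ (p.1 / 2) * x.2 - c₂ * p.2.2.2))) +
          (∑ p ∈ F₂, γ p * ((((2 : ℝ) ^ ((3 * (p.1 : ℝ)) / 4) : ℝ) : ℂ) *
            φ ((2 : ℝ) ^ (p.1 / 2) * x.1 - c₂ * p.2.2.1) *
            ψ ((2 : ℝ) ^ p.1 * x.2 + (2 : ℝ) ^ (p.1 / 2) * (p.2.1 : ℝ) * x.1 - c₁ * p.2.2.2))))
        =ᵐ[volume] 0 →
      (∀ m ∈ F₀, α m = 0) ∧ (∀ p ∈ F₁, β p = 0) ∧ (∀ p ∈ F₂, γ p = 0) := by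
  have hφs : HasCompactSupport φ := by rw [HasCompactSupport, hφsupp]; exact isCompact_Icc
  have hφ0 : φ ≠ 0 := fun h ↦ by simpa [h] using hφON 0 0
  have hψspan_two_four : ∀ a ∈ ({2, 4} : Set ℝ), ∀ ε : ℝ, 0 < ε → ∃ (F : Finset ℤ) (c : ℤ → ℂ),
      eLpNorm (fun x ↦ ψ x - ∑ k ∈ F, c k * φ (a * x - k)) 2 volume < ENNReal.ofReal ε := by
    rintro a (rfl | rfl) ε hε
    · simpa using hψspan 0 0 le_rfl 0 ε hε
    · simpa [show (2 : ℝ) ^ 2 = 4 by norm_num] using hψspan 1 0 zero_le_one 0 ε hε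
  have hψind : LinearIndependent ℂ fun (p : ℕ × ℤ) (x : ℝ) ↦ ψ (2 ^ p.1 * x - c₁ * p.2) :=
    linearIndependent_iff'.mpr fun G β hsum ↦ (h1d c₁ (.inl rfl) ∅ G 0 β (by
      simpa [funext_iff] using hsum)).2
  exact stmt5_general (b := b₁ * b₂) (a₁ := a₁ * b₂) (a₂ := a₂ * b₁) hφc hφs hφ0
    (fun m n hmn ↦ by simpa [hmn] using hφON m n) hψc hψcs
    (fun k l ↦ by simpa using hψorth 0 1 k l (by simp)) hψspan_two_four (hb₁odd.mul hb₂odd)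
    (by rw [hc₁]; push_cast; field_simp) (by rw [hc₂]; push_cast; field_simp)
    (by rw [hc₁]; positivity) (by rw [hc₂]; positivity) hψind
end

section
/- Let g, m : ℝ → ℂ with g continuous and g(0) = 1, and suppose the scaling relation g(ξ) = g(ξ/2) · m(ξ/2) holds for all ξ ∈ ℝ. If m(ξ) ≠ 0 for all ξ ∈ (−1, 1), then g(ξ) ≠ 0 for all ξ ∈ (−2, 2); in particular, inf_{|ξ| ≤ 1/2} |g(ξ)|² > 0. -/
/-!
A zero of `g` propagates along the orbit `x, c • x, c² • x, …`, because the factors `m` never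
vanish there. The orbit converges to `0`, so `g 0 = 0` by continuity, a contradiction. On a compact
set the continuous function `‖g ·‖ ^ 2` attains its minimum, which is therefore positive.
-/

open Filter Set Topology

theorem ne_zero_of_tendsto_iterate {X M₀ : Type*} [TopologicalSpace X] [TopologicalSpace M₀]
    [T1Space M₀] [Mul M₀] [Zero M₀] [NoZeroDivisors M₀] {T : X → X} {s : Set X} {a x : X}
    {g h : X → M₀} (hT : MapsTo T s s) (hscale : ∀ y ∈ s, g y = g (T y) * h y)
    (hh : ∀ y ∈ s, h y ≠ 0) (hg : ContinuousWithinAt g s a) (hga : g a ≠ 0) (hx : x ∈ s)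
    (hlim : Tendsto (fun n : ℕ ↦ T^[n] x) atTop (𝓝 a)) : g x ≠ 0 := by
  intro hgx
  have zeros_invariant : MapsTo T {y ∈ s | g y = 0} {y ∈ s | g y = 0} := fun y ⟨hy, hgy⟩ ↦
    ⟨hT hy, (eq_zero_or_eq_zero_of_mul_eq_zero
      ((hscale y hy).symm.trans hgy)).resolve_right (hh y hy)⟩
  have orbit_zero (n : ℕ) : T^[n] x ∈ {y ∈ s | g y = 0} := zeros_invariant.iterate n ⟨hx, hgx⟩
  have hlim_within : Tendsto (fun n : ℕ ↦ T^[n] x) atTop (𝓝[s] a) :=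
    tendsto_nhdsWithin_iff.mpr ⟨hlim, .of_forall fun n ↦ (orbit_zero n).1⟩
  obtain ⟨n, hn⟩ := ((hg.tendsto.comp hlim_within).eventually_ne hga).exists
  exact hn (orbit_zero n).2

theorem tendsto_iterate_smul_nhds_zero {𝕜 E : Type*} [NormedField 𝕜] [AddCommMonoid E]
    [Module 𝕜 E] [TopologicalSpace E] [ContinuousSMul 𝕜 E] {c : 𝕜} (hc : ‖c‖ < 1) (x : E) :
    Tendsto (fun n : ℕ ↦ (c • ·)^[n] x) atTop (𝓝 0) := by
  simpa only [smul_iterate, zero_smul] using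
    (tendsto_pow_atTop_nhds_zero_of_norm_lt_one hc).smul_const x

theorem lt_iInf_of_isCompact {X α : Type*} [TopologicalSpace X]
    [ConditionallyCompleteLinearOrder α] [TopologicalSpace α] [ClosedIicTopology α] {K : Set X}
    {f : X → α} {b : α} (hK : IsCompact K) (hK_nonempty : K.Nonempty) (hf : ContinuousOn f K)
    (hb : ∀ x ∈ K, b < f x) : b < ⨅ x : K, f x := by
  rw [← sInf_image']
  exact (hK.lt_sInf_iff_of_continuous hK_nonempty hf b).mpr hb

theorem balanced_Ioo_neg_self (r : ℝ) : Balanced ℝ (Ioo (-r) r) := by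
  simpa only [Real.ball_eq_Ioo, zero_sub, zero_add] using
    balanced_ball_zero (𝕜 := ℝ) (E := ℝ) (r := r)

theorem stmt10_general {𝕜 E A : Type*} [NormedField 𝕜] [AddCommGroup E] [Module 𝕜 E]
    [TopologicalSpace E] [ContinuousSMul 𝕜 E] [NormedRing A] [NoZeroDivisors A] {c : 𝕜}
    (hc : ‖c‖ < 1) {s K : Set E} (hs : Balanced 𝕜 s) (hK : IsCompact K)
    (hK_nonempty : K.Nonempty) (hKs : K ⊆ s) {g m : E → A} (hg : ContinuousOn g s)
    (hg0 : g 0 ≠ 0) (hscale : ∀ x ∈ s, g x = g (c • x) * m (c • x))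
    (hm : ∀ x ∈ s, m (c • x) ≠ 0) :
    (∀ x ∈ s, g x ≠ 0) ∧ 0 < ⨅ x : K, ‖g x‖ ^ 2 := by
  have g_ne_zero : ∀ x ∈ s, g x ≠ 0 := fun x hx ↦
    ne_zero_of_tendsto_iterate (fun _ hy ↦ hs.smul_mem hc.le hy) hscale hm
      (hg 0 (hs.zero_mem ⟨x, hx⟩)) hg0 hx (tendsto_iterate_smul_nhds_zero hc x)
  exact ⟨g_ne_zero, lt_iInf_of_isCompact hK hK_nonempty ((hg.mono hKs).norm.pow 2)
    fun x hx ↦ pow_pos (norm_pos_iff.mpr (g_ne_zero x (hKs hx))) 2⟩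

/-- If `g` is continuous with `g(0) = 1`, satisfies the scaling relation
`g(ξ) = g(ξ/2) m(ξ/2)`, and `m` does not vanish on `(-1, 1)`, then `g` does not vanish on
`(-2, 2)`; in particular `inf_{|ξ| ≤ 1/2} |g(ξ)|² > 0`. -/
theorem stmt10 (g m : ℝ → ℂ) (hg : Continuous g) (hg0 : g 0 = 1)
    (hscale : ∀ ξ : ℝ, g ξ = g (ξ / 2) * m (ξ / 2))
    (hm : ∀ ξ ∈ Set.Ioo (-1 : ℝ) 1, m ξ ≠ 0) :
    (∀ ξ ∈ Set.Ioo (-2 : ℝ) 2, g ξ ≠ 0) ∧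
      0 < ⨅ ξ : {ξ : ℝ // |ξ| ≤ 1 / 2}, ‖g ξ.1‖ ^ 2 := by
  have isCompact_abs_le : IsCompact {ξ : ℝ | |ξ| ≤ 1 / 2} := by
    simp only [abs_le]
    exact isCompact_Icc
  have abs_le_subset : {ξ : ℝ | |ξ| ≤ 1 / 2} ⊆ Ioo (-2) 2 := fun ξ hξ ↦
    abs_lt.mp (lt_of_le_of_lt hξ (by norm_num))
  have half_smul (ξ : ℝ) : (2⁻¹ : ℝ) • ξ = ξ / 2 := inv_mul_eq_div 2 ξ
  refine stmt10_general (c := (2⁻¹ : ℝ)) (by norm_num) (balanced_Ioo_neg_self 2)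
    isCompact_abs_le ⟨0, by norm_num⟩ abs_le_subset hg.continuousOn (hg0 ▸ one_ne_zero)
    (fun ξ _ ↦ (half_smul ξ).symm ▸ hscale ξ) fun ξ hξ ↦ ?_
  rw [half_smul]
  exact hm _ ⟨by linarith [hξ.1], by linarith [hξ.2]⟩
end

section
/- For an integer N ≥ 1, define m₀ : ℝ → ℂ by m₀(ξ) = ((1 + e^{−iπξ})/2)^N · ∑_{s=0}^{N−1} C(N−1+s, s) · sin^{2s}(πξ/2), where C(·,·) denotes the binomial coefficient. Then m₀(0) = 1 and m₀(ξ) ≠ 0 for every ξ ∈ (−1, 1). -/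
/-! The sum has nonnegative terms and constant term `1`, so it is positive on the real line. Hence
`m₀` vanishes exactly where its factor `1 + e^(-iπξ)` does, namely at the odd integers. -/

open Finset

/-- The Daubechies polynomial `P_N(y) = ∑_{s<N} C(N-1+s, s) y^s`, as a function on any semiring:
its values in `ℝ` give positivity, those at `y = sin²(πξ/2)` in `ℂ` are the second factor of the
low-pass filter. `N = 0` gives the empty sum. -/
def daubechiesPoly {R : Type*} [Semiring R] (N : ℕ) (y : R) : R :=
  ∑ s ∈ range N, (Nat.choose (N - 1 + s) s : R) * y ^ s

theorem daubechiesPoly_zero {R : Type*} [Semiring R] {N : ℕ} (hN : N ≠ 0) :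
    daubechiesPoly N (0 : R) = 1 := by
  rw [daubechiesPoly, sum_eq_single_of_mem 0 (mem_range.2 hN.bot_lt)]
  · simp
  · intro s _ hs
    rw [zero_pow hs, mul_zero]

theorem daubechiesPoly_pos {R : Type*} [Semiring R] [PartialOrder R] [IsStrictOrderedRing R]
    {N : ℕ} (hN : N ≠ 0) {y : R} (hy : 0 ≤ y) : 0 < daubechiesPoly N y :=
  sum_pos' (fun _ _ => mul_nonneg (Nat.cast_nonneg _) (pow_nonneg hy _))
    ⟨0, mem_range.2 hN.bot_lt, by simp⟩

theorem map_daubechiesPoly {R S : Type*} [Semiring R] [Semiring S] (f : R →+* S) (N : ℕ) (y : R) :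
    f (daubechiesPoly N y) = daubechiesPoly N (f y) := by
  simp only [daubechiesPoly, map_sum, map_mul, map_natCast, map_pow]

theorem daubechiesPoly_ofReal_sq_ne_zero {N : ℕ} (hN : N ≠ 0) (x : ℝ) :
    daubechiesPoly N ((x : ℂ) ^ 2) ≠ 0 := by
  have map_eq := map_daubechiesPoly Complex.ofRealHom N (x ^ 2)
  rw [map_pow, Complex.ofRealHom_eq_coe, Complex.ofRealHom_eq_coe] at map_eq
  exact map_eq ▸ Complex.ofReal_ne_zero.2 (daubechiesPoly_pos hN (sq_nonneg x)).ne'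

theorem one_add_exp_eq_zero_iff {z : ℂ} :
    1 + Complex.exp z = 0 ↔ ∃ k : ℤ, z = (2 * k + 1) * (Real.pi * Complex.I) := by
  rw [add_comm, add_eq_zero_iff_eq_neg, ← Complex.exp_pi_mul_I, Complex.exp_eq_exp_iff_exists_int]
  refine exists_congr fun k => ?_
  rw [show Real.pi * Complex.I + k * (2 * Real.pi * Complex.I) =
    (2 * k + 1) * (Real.pi * Complex.I) by ring]

theorem one_add_exp_neg_pi_mul_I_eq_zero_iff {ξ : ℝ} :
    1 + Complex.exp ((-(Real.pi * ξ) : ℝ) * Complex.I) = 0 ↔ ∃ k : ℤ, ξ = 2 * k + 1 := by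
  have pi_mul_I_ne_zero : (Real.pi : ℂ) * Complex.I ≠ 0 :=
    mul_ne_zero (Complex.ofReal_ne_zero.2 Real.pi_ne_zero) Complex.I_ne_zero
  have exponent_eq : ((-(Real.pi * ξ) : ℝ) : ℂ) * Complex.I =
      ((-ξ : ℝ) : ℂ) * (Real.pi * Complex.I) := by
    push_cast
    ring
  simp only [one_add_exp_eq_zero_iff, exponent_eq, mul_left_inj' pi_mul_I_ne_zero]
  norm_cast
  constructor <;> rintro ⟨k, hk⟩ <;> refine ⟨-k - 1, ?_⟩
  all_goals
    push_cast at hk ⊢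
    linarith

theorem two_mul_intCast_add_one_notMem_Ioo {R : Type*} [Ring R] [PartialOrder R]
    [IsStrictOrderedRing R] (k : ℤ) : (2 * k + 1 : R) ∉ Set.Ioo (-1) 1 := by
  rintro ⟨lower, upper⟩
  have lower_int : -1 < 2 * k + 1 := by exact_mod_cast lower
  have upper_int : 2 * k + 1 < 1 := by exact_mod_cast upper
  omega

theorem stmt11_general (N : ℕ) (hN : 1 ≤ N) (m₀ : ℝ → ℂ)
    (hm₀ : ∀ ξ : ℝ, m₀ ξ =
      ((1 + Complex.exp (((-(Real.pi * ξ) : ℝ) : ℂ) * Complex.I)) / 2) ^ N *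
        ∑ s ∈ Finset.range N, (Nat.choose (N - 1 + s) s : ℂ) *
          ((Real.sin (Real.pi * ξ / 2) : ℂ)) ^ (2 * s)) :
    m₀ 0 = 1 ∧ ∀ ξ : ℝ, m₀ ξ = 0 ↔ ∃ k : ℤ, ξ = 2 * k + 1 := by
  have N_ne_zero : N ≠ 0 := Nat.one_le_iff_ne_zero.1 hN
  have m₀_eq (ξ : ℝ) : m₀ ξ =
      ((1 + Complex.exp ((-(Real.pi * ξ) : ℝ) * Complex.I)) / 2) ^ N *
        daubechiesPoly N ((Real.sin (Real.pi * ξ / 2) : ℂ) ^ 2) := by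
    simp only [hm₀, daubechiesPoly, pow_mul]
  constructor
  · simp [m₀_eq, daubechiesPoly_zero N_ne_zero]
  · intro ξ
    rw [m₀_eq, mul_eq_zero_iff_right (daubechiesPoly_ofReal_sq_ne_zero N_ne_zero _),
      pow_eq_zero_iff N_ne_zero, div_eq_zero_iff, or_iff_left two_ne_zero,
      one_add_exp_neg_pi_mul_I_eq_zero_iff]

/-- The Daubechies low-pass filter
`m₀(ξ) = ((1 + e^(-iπξ))/2)^N ∑_{s=0}^{N-1} C(N-1+s, s) sin^(2s)(πξ/2)`
satisfies `m₀(0) = 1` and `m₀(ξ) ≠ 0` for all `ξ ∈ (-1, 1)`. -/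
theorem stmt11 (N : ℕ) (hN : 1 ≤ N) (m₀ : ℝ → ℂ)
    (hm₀ : ∀ ξ : ℝ, m₀ ξ =
      ((1 + Complex.exp (((-(Real.pi * ξ) : ℝ) : ℂ) * Complex.I)) / 2) ^ N *
        ∑ s ∈ Finset.range N, (Nat.choose (N - 1 + s) s : ℂ) *
          ((Real.sin (Real.pi * ξ / 2) : ℂ)) ^ (2 * s)) :
    m₀ 0 = 1 ∧ ∀ ξ ∈ Set.Ioo (-1 : ℝ) 1, m₀ ξ ≠ 0 := by
  refine (stmt11_general N hN m₀ hm₀).imp_right fun eq_zero_iff ξ hξ hzero => ?_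
  obtain ⟨k, rfl⟩ := (eq_zero_iff ξ).1 hzero
  exact two_mul_intCast_add_one_notMem_Ioo k hξ
end
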